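/- arXiv:1707.02501 — 2 statements merged into one kernel-verified Lean document; each statement's English description precedes it below -/
import Mathlib

section
/- The set of pairs (x,y) ∈ ℚ × ℚ satisfying y² = (x³ + 4)(x⁴ + 8x³ + 16x² + 64) is exactly {(0, 16), (0, −16), (4, 272), (4, −272)}. -/
/-- Rational points with positive ordinate on the Jacobi quartic `y² = 1 - 34 w² + 1445 w⁴`. -/
structure JQ where
  w : ℚ
  y : ℚ
  eq : y ^ 2 = 1 - 34 * w ^ 2 + 1445 * w ^ 4
  pos : 0 < y

namespace JQ

theorem ext' {a b : JQ} (h : a.w = b.w) : a = b := by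
  obtain ⟨w, y, e, p⟩ := a
  obtain ⟨w', y', e', p'⟩ := b
  simp only at h
  subst h
  have : y = y' := by
    have h2 : y ^ 2 = y' ^ 2 := by rw [e, e']
    exact (pow_left_inj₀ p.le p'.le two_ne_zero).mp h2
  subst this
  rfl

theorem five_not_sq (r : ℚ) : 5 * r ^ 2 ≠ 1 := by
  intro h
  have h1 : IsSquare (5 : ℚ) := by
    refine ⟨5 * r, ?_⟩
    linear_combination (-5) * h
  have h2 : IsSquare ((5 : ℕ) : ℚ) := by exact_mod_cast h1
  rw [Rat.isSquare_natCast_iff] at h2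
  obtain ⟨k, hk⟩ := h2
  have : k ≤ 2 := by nlinarith
  interval_cases k <;> omega

theorem den_ne (w1 w2 : ℚ) : 1 - 1445 * w1 ^ 2 * w2 ^ 2 ≠ 0 := by
  intro h
  apply five_not_sq (17 * w1 * w2)
  linear_combination -h

theorem clos (w1 y1 w2 y2 : ℚ) (h1 : y1^2 = 1-34*w1^2+1445*w1^4)
    (h2 : y2^2 = 1-34*w2^2+1445*w2^4) :
    ((1+1445*w1^2*w2^2)*(y1*y2-34*w1*w2)+2*1445*w1*w2*(w1^2+w2^2))^2
     = (1-1445*w1^2*w2^2)^4 - 34*(w1*y2+y1*w2)^2*(1-1445*w1^2*w2^2)^2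
        +1445*(w1*y2+y1*w2)^4 := by
  grind

theorem num_pos (w1 y1 w2 y2 : ℚ) (h1 : y1^2 = 1-34*w1^2+1445*w1^4)
    (h2 : y2^2 = 1-34*w2^2+1445*w2^4) (p1 : 0 < y1) (p2 : 0 < y2) :
    0 < (1+1445*w1^2*w2^2)*(y1*y2-34*w1*w2)+2*1445*w1*w2*(w1^2+w2^2) := by
  set a := 1+1445*w1^2*w2^2 with ha
  have apos : 0 < a := by positivity
  set q := w1^2+w2^2 with hq
  have hA : 0 < a * (y1 * y2) := by positivity
  have hD : 0 < (1 - 1445 * w1 ^ 2 * w2 ^ 2) ^ 2 := by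
    have := den_ne w1 w2
    positivity
  have hqf : 0 < a ^ 2 - 34 * q * a + 1445 * q ^ 2 := by
    nlinarith [sq_nonneg (q - 17/1445 * a), mul_pos apos apos]
  have key : (w1 * w2 * (2 * 1445 * q - 34 * a)) ^ 2 < (a * (y1 * y2)) ^ 2 := by
    have e : (a * (y1 * y2)) ^ 2 - (w1 * w2 * (2 * 1445 * q - 34 * a)) ^ 2
       = (1 - 1445 * w1 ^ 2 * w2 ^ 2) ^ 2 * (a ^ 2 - 34 * q * a + 1445 * q ^ 2) := by
      have : (a * (y1 * y2)) ^ 2 = a ^ 2 * (y1 ^ 2 * y2 ^ 2) := by ring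
      rw [this, h1, h2, ha, hq]
      ring
    have := mul_pos hD hqf
    linarith
  have := (abs_lt_of_sq_lt_sq' key hA.le).1
  linarith

theorem assoc_aux (w1 y1 w2 y2 w3 y3 : ℚ) (h1 : y1^2 = 1-34*w1^2+1445*w1^4)
    (h2 : y2^2 = 1-34*w2^2+1445*w2^4) (h3 : y3^2 = 1-34*w3^2+1445*w3^4) :
    ((1-1445*w1^2*w2^2)*(w1*y2+y1*w2)*y3 + ((1+1445*w1^2*w2^2)*(y1*y2-34*w1*w2)
      +2*1445*w1*w2*(w1^2+w2^2))*w3) * ((1-1445*w2^2*w3^2)^2-1445*w1^2*(w2*y3+y2*w3)^2)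
    = ((1-1445*w2^2*w3^2)*(w2*y3+y2*w3)*y1 + ((1+1445*w2^2*w3^2)*(y2*y3-34*w2*w3)
      +2*1445*w2*w3*(w2^2+w3^2))*w1) * ((1-1445*w1^2*w2^2)^2-1445*w3^2*(w1*y2+y1*w2)^2) := by
  grind

/-- The complete addition law. -/
def add (a b : JQ) : JQ where
  w := (a.w * b.y + a.y * b.w) / (1 - 1445 * a.w ^ 2 * b.w ^ 2)
  y := ((1 + 1445 * a.w ^ 2 * b.w ^ 2) * (a.y * b.y - 34 * a.w * b.w)
    + 2 * 1445 * a.w * b.w * (a.w ^ 2 + b.w ^ 2)) / (1 - 1445 * a.w ^ 2 * b.w ^ 2) ^ 2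
  eq := by
    have hD := den_ne a.w b.w
    have := clos a.w a.y b.w b.y a.eq b.eq
    rw [div_pow, this]
    field_simp
  pos := by
    have hD := den_ne a.w b.w
    exact div_pos (num_pos _ _ _ _ a.eq b.eq a.pos b.pos) (by positivity)

instance : Add JQ := ⟨add⟩
instance : Zero JQ := ⟨⟨0, 1, by norm_num, by norm_num⟩⟩
instance : Neg JQ := ⟨fun a => ⟨-a.w, a.y, by rw [a.eq]; ring, a.pos⟩⟩

theorem add_w (a b : JQ) :
    (a + b).w = (a.w * b.y + a.y * b.w) / (1 - 1445 * a.w ^ 2 * b.w ^ 2) := rfl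
theorem add_y (a b : JQ) :
    (a + b).y = ((1 + 1445 * a.w ^ 2 * b.w ^ 2) * (a.y * b.y - 34 * a.w * b.w)
    + 2 * 1445 * a.w * b.w * (a.w ^ 2 + b.w ^ 2)) / (1 - 1445 * a.w ^ 2 * b.w ^ 2) ^ 2 := rfl
theorem zero_w : (0 : JQ).w = 0 := rfl
theorem zero_y : (0 : JQ).y = 1 := rfl
theorem neg_w (a : JQ) : (-a).w = -a.w := rfl
theorem neg_y (a : JQ) : (-a).y = a.y := rfl

instance : AddCommGroup JQ where
  add_assoc a b c := by
    apply ext'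
    have h12 := den_ne a.w b.w
    have h23 := den_ne b.w c.w
    have hl := den_ne (a + b).w c.w
    have hr := den_ne a.w (b + c).w
    rw [add_w (a + b) c, add_w a (b + c), div_eq_div_iff hl hr]
    rw [add_w a b, add_y a b, add_w b c, add_y b c]
    have := assoc_aux a.w a.y b.w b.y c.w c.y a.eq b.eq c.eq
    set D12 := 1 - 1445 * a.w ^ 2 * b.w ^ 2
    set D23 := 1 - 1445 * b.w ^ 2 * c.w ^ 2
    field_simp
    linear_combination this
  zero_add a := by
    apply ext'
    simp [add_w, zero_w, zero_y]
  add_zero a := by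
    apply ext'
    simp [add_w, zero_w, zero_y]
  add_comm a b := by
    apply ext'
    rw [add_w, add_w]
    congr 1 <;> ring
  neg_add_cancel a := by
    apply ext'
    rw [add_w, neg_w, neg_y, zero_w]
    rw [show -a.w * a.y + a.y * a.w = 0 by ring, zero_div]
  nsmul := nsmulRec
  zsmul := zsmulRec

/-- The generator. -/
def Q : JQ := ⟨3 / 19, 370 / 361, by norm_num, by norm_num⟩

end JQ


theorem zmod_dvd (p : ℕ) (a : ℤ) : ((a : ZMod p) = 0) ↔ (p : ℤ) ∣ a := ZMod.intCast_zmod_eq_zero_iff_dvd a p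

theorem five_nonres17 (a b : ℤ) (h : (17 : ℤ) ∣ a ^ 2 - 5 * b ^ 2) : (17 : ℤ) ∣ b := by
  have h1 : (((a ^ 2 - 5 * b ^ 2 : ℤ)) : ZMod 17) = 0 := (zmod_dvd 17 _).mpr (by exact_mod_cast h)
  have : ((b : ℤ) : ZMod 17) = 0 := by
    push_cast at h1
    generalize (a : ZMod 17) = x at h1
    generalize (b : ZMod 17) = z at h1 ⊢
    revert x z
    decide
  exact_mod_cast (zmod_dvd 17 _).mp this

theorem p17 : Prime (17 : ℤ) := Int.prime_iff_natAbs_prime.mpr (by norm_num)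
theorem p5 : Prime (5 : ℤ) := Int.prime_iff_natAbs_prime.mpr (by norm_num)

theorem not17 (α β Y : ℤ) (hc : IsCoprime α β)
    (h : Y ^ 2 = β ^ 4 - 34 * α ^ 2 * β ^ 2 + 1445 * α ^ 4) : ¬ (17 : ℤ) ∣ β := by
  rintro ⟨b, rfl⟩
  have hY : (17 : ℤ) ∣ Y := by
    apply p17.dvd_of_dvd_pow (n := 2)
    rw [h]
    exact ⟨17 ^ 3 * b ^ 4 - 34 * α ^ 2 * 17 * b ^ 2 + 85 * α ^ 4, by ring⟩
  obtain ⟨y, rfl⟩ := hY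
  have h2 : y ^ 2 - 5 * (α ^ 2) ^ 2 = 17 * (17 * b ^ 4 - 2 * α ^ 2 * b ^ 2) := by
    have : (289 : ℤ) * (y ^ 2 - 5 * (α ^ 2) ^ 2) = 289 * (17 * (17 * b ^ 4 - 2 * α ^ 2 * b ^ 2)) := by
      linear_combination h
    linarith
  have h3 : (17 : ℤ) ∣ α ^ 2 := five_nonres17 y (α ^ 2) ⟨_, h2⟩
  have h4 : (17 : ℤ) ∣ α := p17.dvd_of_dvd_pow h3
  exact p17.not_isUnit (hc.isUnit_of_dvd' h4 (Dvd.intro _ rfl))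

/-- coprime factors of a square which are nonnegative are squares of nonnegative integers -/
theorem sq_factors (M N k : ℤ) (hc : IsCoprime M N) (hM : 0 ≤ M) (hN : 0 ≤ N) (h : M * N = k ^ 2) :
    ∃ m n : ℤ, 0 ≤ m ∧ 0 ≤ n ∧ M = m ^ 2 ∧ N = n ^ 2 ∧ (k = m * n ∨ k = -(m * n)) := by
  have aux : ∀ A : ℤ, 0 ≤ A → (∃ a0 : ℤ, A = a0 ^ 2 ∨ A = -a0 ^ 2) → ∃ a : ℤ, 0 ≤ a ∧ A = a ^ 2 := by
    rintro A hA ⟨a0, h | h⟩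
    · exact ⟨|a0|, abs_nonneg _, by rw [sq_abs]; exact h⟩
    · have : a0 = 0 := by nlinarith [sq_nonneg a0]
      exact ⟨0, le_refl _, by rw [h, this]; ring⟩
  obtain ⟨m, hm, rfl⟩ := aux M hM (Int.sq_of_isCoprime hc h)
  obtain ⟨n, hn, rfl⟩ := aux N hN (Int.sq_of_isCoprime hc.symm (by rw [mul_comm]; exact h))
  refine ⟨m, n, hm, hn, rfl, rfl, ?_⟩
  apply sq_eq_sq_iff_eq_or_eq_neg.mp
  rw [← h]; ring

theorem fourth_factors (M N k : ℤ) (hc : IsCoprime M N) (hM : 0 ≤ M) (hN : 0 ≤ N)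
    (h : M * N = k ^ 4) :
    ∃ m n : ℤ, M = m ^ 4 ∧ N = n ^ 4 ∧ (k = m * n ∨ k = -(m * n)) := by
  obtain ⟨m, n, hm, hn, rfl, rfl, h1⟩ := sq_factors M N (k ^ 2) hc hM hN (by rw [h]; ring)
  have hc' : IsCoprime m n := (IsCoprime.pow_iff two_pos two_pos).mp hc
  have h2 : m * n = k ^ 2 := by
    rcases h1 with h1 | h1
    · exact h1.symm
    · have := mul_nonneg hm hn
      nlinarith [sq_nonneg k]
  obtain ⟨a, b, ha, hb, rfl, rfl, h3⟩ := sq_factors m n k hc' hm hn h2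
  exact ⟨a, b, by ring, by ring, h3⟩

theorem five_factors (M N k : ℤ) (hc : IsCoprime M N) (hM : 0 ≤ M) (hN : 0 ≤ N)
    (h : M * N = 5 * k ^ 4) :
    ∃ m n : ℤ, ((M = m ^ 4 ∧ N = 5 * n ^ 4) ∨ (M = 5 * n ^ 4 ∧ N = m ^ 4)) ∧
      (k = m * n ∨ k = -(m * n)) := by
  have h5 : (5 : ℤ) ∣ M * N := ⟨_, h⟩
  rcases p5.dvd_or_dvd h5 with ⟨a, rfl⟩ | ⟨a, rfl⟩
  · obtain ⟨m, n, rfl, rfl, h1⟩ := fourth_factors a N k hc.of_mul_left_right (by linarith) hN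
      (by linarith)
    refine ⟨n, m, Or.inr ⟨rfl, rfl⟩, ?_⟩
    rw [mul_comm n m]; exact h1
  · obtain ⟨m, n, rfl, rfl, h1⟩ := fourth_factors M a k hc.of_mul_right_right hM (by linarith)
      (by linarith)
    exact ⟨m, n, Or.inl ⟨rfl, rfl⟩, h1⟩

theorem big_factors (M N k : ℤ) (hc : IsCoprime M N) (hM : 0 ≤ M) (hN : 0 ≤ N)
    (h : M * N = 1445 * k ^ 4) :
    ∃ m n : ℤ, ((M = m ^ 4 ∧ N = 1445 * n ^ 4) ∨ (M = 1445 * n ^ 4 ∧ N = m ^ 4) ∨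
      (M = 5 * m ^ 4 ∧ N = 289 * n ^ 4) ∨ (M = 289 * n ^ 4 ∧ N = 5 * m ^ 4)) ∧
      (k = m * n ∨ k = -(m * n)) := by
  have aux : ∀ A B : ℤ, IsCoprime A B → A * B = 1445 * k ^ 4 → (17 : ℤ) ∣ A → (289 : ℤ) ∣ A := by
    intro A B hAB hm hd
    have h1 : IsCoprime (17 : ℤ) B := hAB.of_isCoprime_of_dvd_left hd
    have h2 : IsCoprime (289 : ℤ) B := by
      have := IsCoprime.pow_left (m := 2) h1
      norm_num at this
      exact this
    apply h2.dvd_of_dvd_mul_right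
    rw [hm]
    exact ⟨5 * k ^ 4, by ring⟩
  have h17 : (17 : ℤ) ∣ M * N := ⟨85 * k ^ 4, by rw [h]; ring⟩
  rcases p17.dvd_or_dvd h17 with hd | hd
  · obtain ⟨a, rfl⟩ := aux M N hc h hd
    obtain ⟨m, n, h1, h2⟩ := five_factors a N k hc.of_mul_left_right (by linarith) hN
      (by linarith)
    rcases h1 with ⟨rfl, rfl⟩ | ⟨rfl, rfl⟩
    · refine ⟨n, m, Or.inr (Or.inr (Or.inr ⟨rfl, rfl⟩)), ?_⟩
      rw [mul_comm n m]; exact h2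
    · exact ⟨m, n, Or.inr (Or.inl ⟨by ring, rfl⟩), h2⟩
  · obtain ⟨a, rfl⟩ := aux N M hc.symm (by rw [mul_comm]; exact h) hd
    obtain ⟨m, n, h1, h2⟩ := five_factors M a k hc.of_mul_right_right hM (by linarith)
      (by linarith)
    rcases h1 with ⟨rfl, rfl⟩ | ⟨rfl, rfl⟩
    · exact ⟨m, n, Or.inl ⟨rfl, by ring⟩, h2⟩
    · refine ⟨n, m, Or.inr (Or.inr (Or.inl ⟨rfl, rfl⟩)), ?_⟩
      rw [mul_comm n m]; exact h2

theorem nonneg_pair (M N : ℤ) (hs : 0 < M + N) (hp : 0 ≤ M * N) : 0 ≤ M ∧ 0 ≤ N := by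
  constructor
  · by_contra hM
    push Not at hM
    have : 0 < N := by linarith
    nlinarith
  · by_contra hM
    push Not at hM
    have : 0 < M := by linarith
    nlinarith

theorem first_descent (α β Y : ℤ) (hc : IsCoprime α β) (hY : 0 < Y)
    (h : Y ^ 2 = β ^ 4 - 34 * α ^ 2 * β ^ 2 + 1445 * α ^ 4) :
    ∃ e c : ℤ, α = e * c ∧ IsCoprime e c ∧ Y = e ^ 4 + 289 * c ^ 4 ∧
      (β ^ 2 = e ^ 4 + 17 * e ^ 2 * c ^ 2 - 289 * c ^ 4 ∨
       β ^ 2 = 289 * c ^ 4 + 17 * c ^ 2 * e ^ 2 - e ^ 4) := by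
  have hn := not17 α β Y hc h
  obtain ⟨M, hM⟩ : ∃ M, Y + (β ^ 2 - 17 * α ^ 2) = 2 * M := by
    have : Even (Y + (β ^ 2 - 17 * α ^ 2)) := by
      have h1 : Even (Y ^ 2 - (β ^ 2 - 17 * α ^ 2) ^ 2) := ⟨578 * α ^ 4, by rw [h]; ring⟩
      have h2 : Y ^ 2 - (β ^ 2 - 17 * α ^ 2) ^ 2
          = (Y + (β ^ 2 - 17 * α ^ 2)) * (Y + (β ^ 2 - 17 * α ^ 2) - 2 * (β ^ 2 - 17 * α ^ 2)) := by
        ring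
      rw [h2, Int.even_mul] at h1
      rcases h1 with h1 | h1
      · exact h1
      · have := h1.add (even_two_mul (β ^ 2 - 17 * α ^ 2))
        simpa using this
    exact this.two_dvd
  set N := Y - M with hN
  have hMN : M * N = (17 * α ^ 2) ^ 2 := by
    have e1 : 2 * N = Y - (β ^ 2 - 17 * α ^ 2) := by rw [hN]; linarith
    have : (2 * M) * (2 * N) = 4 * (17 * α ^ 2) ^ 2 := by
      rw [← hM, e1]; linear_combination h
    linarith
  have hdiff : M - N = β ^ 2 - 17 * α ^ 2 := by rw [hN]; linarith
  have hcop : IsCoprime M N := by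
    apply isCoprime_of_prime_dvd
    · rintro ⟨a, b⟩
      rw [a] at hN; linarith
    · intro ℓ hℓ h1 h2
      have h3 : ℓ ∣ (17 * α ^ 2) := by
        apply hℓ.dvd_of_dvd_pow (n := 2)
        rw [← hMN]; exact h1.mul_right _
      have h4 : ℓ ∣ β := by
        apply hℓ.dvd_of_dvd_pow (n := 2)
        have : β ^ 2 = (M - N) + 17 * α ^ 2 := by linarith
        rw [this]
        exact dvd_add (dvd_sub h1 h2) h3
      rcases hℓ.dvd_or_dvd h3 with h5 | h5
      · have : Associated ℓ 17 := hℓ.associated_of_dvd p17 h5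
        exact hn (this.symm.dvd.trans h4)
      · exact hℓ.not_isUnit (hc.isUnit_of_dvd' (hℓ.dvd_of_dvd_pow h5) h4)
  obtain ⟨hM0, hN0⟩ := nonneg_pair M N (by rw [hN]; linarith) (by rw [hMN]; positivity)
  obtain ⟨m, n, hm, hn', hMm, hNn, hmn⟩ := sq_factors M N _ hcop hM0 hN0 hMN
  have hmn' : m * n = 17 * α ^ 2 := by
    rcases hmn with hmn | hmn
    · exact hmn.symm
    · nlinarith [mul_nonneg hm hn', sq_nonneg α]
  have hcop' : IsCoprime m n := by
    rw [hMm, hNn] at hcop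
    exact (IsCoprime.pow_iff two_pos two_pos).mp hcop
  have aux : ∀ a b : ℤ, 0 ≤ 17 * a → 0 ≤ b → IsCoprime (17 * a) b → (17 * a) * b = 17 * α ^ 2 →
      ∃ e c : ℤ, α = e * c ∧ IsCoprime e c ∧ a = c ^ 2 ∧ b = e ^ 2 := by
    intro a b ha hb hab h1
    obtain ⟨c, e, hc0, he0, rfl, rfl, h3⟩ := sq_factors a b α hab.of_mul_left_right (by linarith)
      hb (by linarith)
    have hec : IsCoprime e c :=
      ((IsCoprime.pow_iff two_pos two_pos).mp hab.of_mul_left_right).symm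
    rcases h3 with h3 | h3
    · exact ⟨e, c, by rw [h3]; ring, hec, rfl, rfl⟩
    · exact ⟨e, -c, by rw [h3]; ring, hec.neg_right, by ring, rfl⟩
  have h17 : (17 : ℤ) ∣ m * n := ⟨_, hmn'⟩
  rcases p17.dvd_or_dvd h17 with ⟨a, rfl⟩ | ⟨a, rfl⟩
  · obtain ⟨e, c, h1, h2, rfl, rfl⟩ := aux a n hm hn' hcop' hmn'
    refine ⟨e, c, h1, h2, by linear_combination hMm + hNn - hN, Or.inr ?_⟩
    rw [hMm, hNn, h1] at hdiff
    linear_combination -hdiff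
  · obtain ⟨e, c, h1, h2, rfl, rfl⟩ := aux a m hn' hm hcop'.symm (by rw [mul_comm]; exact hmn')
    refine ⟨e, c, h1, h2, by linear_combination hMm + hNn - hN, Or.inl ?_⟩
    rw [hMm, hNn, h1] at hdiff
    linear_combination -hdiff


theorem coprime_of_prime_sq (M N d k : ℤ) (hd : Squarefree d) (h : M * N = d * k ^ 4)
    (h0 : M + N ≠ 0)
    (hk : ∀ ℓ : ℤ, Prime ℓ → ℓ ∣ M → ℓ ∣ N → ℓ ∣ k → False) : IsCoprime M N := by
  apply isCoprime_of_prime_dvd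
  · rintro ⟨a, b⟩
    exact h0 (by rw [a, b]; rfl)
  · intro ℓ hℓ h1 h2
    apply hk ℓ hℓ h1 h2
    by_contra hn
    have h3 : ℓ * ℓ ∣ d * k ^ 4 := by rw [← h]; exact mul_dvd_mul h1 h2
    have h4 : IsCoprime (ℓ * ℓ) (k ^ 4) := by
      have : IsCoprime ℓ k := (hℓ.irreducible.coprime_iff_not_dvd).mpr hn
      exact (this.pow_right).mul_left this.pow_right
    exact hℓ.not_isUnit (hd ℓ (h4.dvd_of_dvd_mul_right h3))

theorem coprime1445 (M N k : ℤ) (h : M * N = 1445 * k ^ 4)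
    (h0 : M + N ≠ 0) (h17 : (17 : ℤ) ∣ M → (17 : ℤ) ∣ N → False)
    (hk : ∀ ℓ : ℤ, Prime ℓ → ℓ ∣ M → ℓ ∣ N → ℓ ∣ k → False) : IsCoprime M N := by
  apply isCoprime_of_prime_dvd
  · rintro ⟨a, b⟩
    exact h0 (by rw [a, b]; rfl)
  · intro ℓ hℓ h1 h2
    apply hk ℓ hℓ h1 h2
    by_contra hn
    have h3 : ℓ * ℓ ∣ 5 * 17 ^ 2 * k ^ 4 := by
      rw [show (5 * 17 ^ 2 * k ^ 4 : ℤ) = M * N by rw [h]; norm_num]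
      exact mul_dvd_mul h1 h2
    have h4 : IsCoprime (ℓ * ℓ) (k ^ 4) := by
      have : IsCoprime ℓ k := (hℓ.irreducible.coprime_iff_not_dvd).mpr hn
      exact (this.pow_right).mul_left this.pow_right
    have h5 : ℓ * ℓ ∣ 5 * 17 ^ 2 := h4.dvd_of_dvd_mul_right h3
    have h17' : ¬ ℓ ∣ 17 := by
      intro hd
      have := (hℓ.associated_of_dvd p17 hd).symm.dvd
      exact h17 (this.trans h1) (this.trans h2)
    have h6 : IsCoprime (ℓ * ℓ) (17 ^ 2) := by
      have : IsCoprime ℓ 17 := (hℓ.irreducible.coprime_iff_not_dvd).mpr h17'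
      exact (this.pow_right).mul_left this.pow_right
    have h7 : ℓ * ℓ ∣ 5 := h6.dvd_of_dvd_mul_right h5
    exact hℓ.not_isUnit (p5.irreducible.squarefree ℓ h7)

theorem two_prime : Prime (2 : ℤ) := Int.prime_two

theorem dvd_of_two_mul (ℓ a : ℤ) (hℓ : Prime ℓ) (h2 : ¬ ℓ ∣ 2) (h : ℓ ∣ 2 * a) : ℓ ∣ a :=
  (hℓ.dvd_or_dvd h).resolve_left h2

theorem not_two_of_odd_prod (ℓ A : ℤ) (hℓ : Prime ℓ) (h : ℓ ∣ A) (hA : ¬ (2 : ℤ) ∣ A) : ¬ ℓ ∣ 2 := by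
  intro hd
  exact hA ((hℓ.associated_of_dvd two_prime hd).symm.dvd.trans h)

theorem no_5_289 (e c a s t : ℤ) (hec : IsCoprime e c) (hc : c = a * (s * t))
    (h : (17 : ℤ) ∣ e ^ 2 - 5 * (s ^ 2) ^ 2) : False := by
  have h1 := p17.dvd_of_dvd_pow (five_nonres17 _ _ h)
  have h2 : (17 : ℤ) ∣ e := by
    apply p17.dvd_of_dvd_pow (n := 2)
    have : e ^ 2 = (e ^ 2 - 5 * (s ^ 2) ^ 2) + s * (5 * s ^ 3) := by ring
    rw [this]
    exact dvd_add h (h1.mul_right _)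
  have h3 : (17 : ℤ) ∣ c := by
    rw [hc]
    exact (h1.mul_right _).mul_left _
  exact p17.not_isUnit (hec.isUnit_of_dvd' h2 h3)

theorem type_one (e c β : ℤ) (hec : IsCoprime e c) (h17 : ¬ (17 : ℤ) ∣ β)
    (h : β ^ 2 = e ^ 4 + 17 * e ^ 2 * c ^ 2 - 289 * c ^ 4) :
    ∃ s t Y : ℤ, Y ^ 2 = s ^ 4 - 34 * s ^ 2 * t ^ 2 + 1445 * t ^ 4 ∧
      e * c * (s ^ 4 - 1445 * t ^ 4) = 2 * s * t * Y * β ∧ Y ^ 2 ≤ 4 * e ^ 2 ∧ Y ≠ 0 := by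
  have he0 : e ≠ 0 := by
    rintro rfl
    have : IsUnit c := isCoprime_zero_left.mp hec
    nlinarith [sq_nonneg β, sq_nonneg (c^2 - 1), Int.isUnit_iff.mp this, Int.isUnit_sq this]
  have hepos : 0 < e ^ 2 := by positivity
  by_cases hce : (2 : ℤ) ∣ c
  · obtain ⟨k, rfl⟩ := hce
    have heodd : Odd e := by
      rw [← Int.not_even_iff_odd]
      intro hev
      exact two_prime.not_isUnit (hec.isUnit_of_dvd' hev.two_dvd (Dvd.intro _ rfl))
    have hbodd : Odd β := by
      have : Odd (β ^ 2) := by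
        rw [h]
        obtain ⟨m, rfl⟩ := heodd
        exact ⟨8 * m ^ 4 + 16 * m ^ 3 + 12 * m ^ 2 + 4 * m + 34 * (2 * m + 1) ^ 2 * k ^ 2
          - 2312 * k ^ 4, by ring⟩
      exact (Int.odd_pow.mp this).resolve_right (by norm_num)
    obtain ⟨M, hM⟩ : ∃ M, e ^ 2 + 34 * k ^ 2 - β = 2 * M := by
      obtain ⟨m, rfl⟩ := heodd
      obtain ⟨n, rfl⟩ := hbodd
      exact ⟨2 * m ^ 2 + 2 * m + 17 * k ^ 2 - n, by ring⟩
    obtain ⟨N, hN⟩ : ∃ N, N = M + β := ⟨_, rfl⟩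
    have hMN : M * N = 1445 * k ^ 4 := by
      have : (2 * M) * (2 * M + 2 * β) = 4 * (1445 * k ^ 4) := by
        rw [← hM]; linear_combination -h
      rw [hN]; linarith
    have hsum : M + N = e ^ 2 + 34 * k ^ 2 := by rw [hN]; linarith
    have hcop : IsCoprime M N := by
      apply coprime1445 M N k hMN
      · rw [hsum]; positivity
      · intro h1 h2
        apply h17
        have : β = N - M := by rw [hN]; ring
        rw [this]; exact dvd_sub h2 h1
      · intro ℓ hℓ h1 h2 h3
        have h4 : ℓ ∣ e := by
          apply hℓ.dvd_of_dvd_pow (n := 2)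
          have : e ^ 2 = M + N - k * (34 * k) := by rw [hsum]; ring
          rw [this]
          exact dvd_sub (dvd_add h1 h2) (h3.mul_right _)
        exact hℓ.not_isUnit (hec.isUnit_of_dvd' h4 (h3.mul_left 2))
    obtain ⟨hM0, hN0⟩ := nonneg_pair M N (by rw [hsum]; positivity) (by rw [hMN]; positivity)
    obtain ⟨s, t, h1, h2⟩ := big_factors M N k hcop hM0 hN0 hMN
    have hk2 : k ^ 2 = s ^ 2 * t ^ 2 := by
      rcases h2 with rfl | rfl <;> ring
    have hβ : β = N - M := by rw [hN]; ring
    have hA : (M = s ^ 4 ∧ N = 1445 * t ^ 4) ∨ (M = 1445 * t ^ 4 ∧ N = s ^ 4) := by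
      have hbad : M + N = 5 * s ^ 4 + 289 * t ^ 4 → False := by
        intro h3
        have h4 : (17 : ℤ) ∣ e ^ 2 - 5 * (s ^ 2) ^ 2 := ⟨17 * t ^ 4 - 2 * k ^ 2, by
          linear_combination -hsum + h3⟩
        rcases h2 with h2 | h2
        · exact no_5_289 e _ 2 s t hec (by rw [h2]) h4
        · exact no_5_289 e _ (-2) s t hec (by rw [h2]; ring) h4
      rcases h1 with h1 | h1 | h1 | h1
      · exact Or.inl h1
      · exact Or.inr h1
      · exact (hbad (by rw [h1.1, h1.2])).elim
      · exact (hbad (by rw [h1.1, h1.2]; ring)).elim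
    have hY : e ^ 2 = s ^ 4 - 34 * s ^ 2 * t ^ 2 + 1445 * t ^ 4 := by
      rcases hA with ⟨a, b⟩ | ⟨a, b⟩ <;> rw [a, b] at hsum <;> linear_combination -hsum - 34 * hk2
    have hβ2 : s ^ 4 - 1445 * t ^ 4 = β ∨ s ^ 4 - 1445 * t ^ 4 = - β := by
      rcases hA with ⟨a, b⟩ | ⟨a, b⟩ <;> rw [a, b] at hβ
      · right; linarith
      · left; linarith
    rcases hβ2 with h5 | h5 <;> rcases h2 with h6 | h6
    · exact ⟨s, t, e, hY, by rw [h5, h6]; ring, by linarith, by simpa using he0⟩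
    · exact ⟨s, t, -e, by rw [← hY]; ring, by rw [h5, h6]; ring, by linarith, by simpa using he0⟩
    · exact ⟨s, t, -e, by rw [← hY]; ring, by rw [h5, h6]; ring, by linarith, by simpa using he0⟩
    · exact ⟨s, t, e, hY, by rw [h5, h6]; ring, by linarith, by simpa using he0⟩
  · obtain ⟨M, hM⟩ : ∃ M, M = 2 * e ^ 2 + 17 * c ^ 2 - 2 * β := ⟨_, rfl⟩
    obtain ⟨N, hN⟩ : ∃ N, N = 2 * e ^ 2 + 17 * c ^ 2 + 2 * β := ⟨_, rfl⟩
    have hMN : M * N = 1445 * c ^ 4 := by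
      rw [hM, hN]; linear_combination -4 * h
    have hsum : M + N = 4 * e ^ 2 + 34 * c ^ 2 := by rw [hM, hN]; ring
    have hβ : 4 * β = N - M := by rw [hN, hM]; ring
    have hModd : ¬ (2 : ℤ) ∣ M := by
      rw [hM]
      intro h1
      apply hce
      apply two_prime.dvd_of_dvd_pow (n := 2)
      have : c ^ 2 = (2 * e ^ 2 + 17 * c ^ 2 - 2 * β) + 2 * (β - e ^ 2 - 8 * c ^ 2) := by ring
      rw [this]
      exact dvd_add h1 (Dvd.intro _ rfl)
    have hcop : IsCoprime M N := by
      apply coprime1445 M N c hMN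
      · rw [hsum]; positivity
      · intro h1 h2
        apply h17
        have : (17 : ℤ) ∣ 4 * β := by rw [hβ]; exact dvd_sub h2 h1
        omega
      · intro ℓ hℓ h1 h2 h3
        have hl2 := not_two_of_odd_prod ℓ M hℓ h1 hModd
        have h4 : ℓ ∣ e := by
          apply hℓ.dvd_of_dvd_pow (n := 2)
          apply dvd_of_two_mul ℓ _ hℓ hl2
          apply dvd_of_two_mul ℓ _ hℓ hl2
          have : 2 * (2 * e ^ 2) = M + N - c * (34 * c) := by rw [hsum]; ring
          rw [this]
          exact dvd_sub (dvd_add h1 h2) (h3.mul_right _)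
        exact hℓ.not_isUnit (hec.isUnit_of_dvd' h4 h3)
    obtain ⟨hM0, hN0⟩ := nonneg_pair M N (by rw [hsum]; positivity) (by rw [hMN]; positivity)
    obtain ⟨s, t, h1, h2⟩ := big_factors M N c hcop hM0 hN0 hMN
    have hk2 : c ^ 2 = s ^ 2 * t ^ 2 := by
      rcases h2 with rfl | rfl <;> ring
    have hec2 : IsCoprime (2 * e) c := by
      refine IsCoprime.mul_left ?_ hec
      exact (two_prime.irreducible.coprime_iff_not_dvd).mpr hce
    have hA : (M = s ^ 4 ∧ N = 1445 * t ^ 4) ∨ (M = 1445 * t ^ 4 ∧ N = s ^ 4) := by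
      have hbad : M + N = 5 * s ^ 4 + 289 * t ^ 4 → False := by
        intro h3
        have h4 : (17 : ℤ) ∣ (2 * e) ^ 2 - 5 * (s ^ 2) ^ 2 := ⟨17 * t ^ 4 - 2 * c ^ 2, by
          linear_combination -hsum + h3⟩
        rcases h2 with h2 | h2
        · exact no_5_289 _ _ 1 s t hec2 (by rw [h2]; ring) h4
        · exact no_5_289 _ _ (-1) s t hec2 (by rw [h2]; ring) h4
      rcases h1 with h1 | h1 | h1 | h1
      · exact Or.inl h1
      · exact Or.inr h1
      · exact (hbad (by rw [h1.1, h1.2])).elim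
      · exact (hbad (by rw [h1.1, h1.2]; ring)).elim
    have hY : (2 * e) ^ 2 = s ^ 4 - 34 * s ^ 2 * t ^ 2 + 1445 * t ^ 4 := by
      rcases hA with ⟨a, b⟩ | ⟨a, b⟩ <;> rw [a, b] at hsum <;> linear_combination -hsum - 34 * hk2
    have hβ2 : s ^ 4 - 1445 * t ^ 4 = 4 * β ∨ s ^ 4 - 1445 * t ^ 4 = - (4 * β) := by
      rcases hA with ⟨a, b⟩ | ⟨a, b⟩ <;> rw [a, b] at hβ
      · right; linarith
      · left; linarith
    rcases hβ2 with h5 | h5 <;> rcases h2 with h6 | h6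
    · exact ⟨s, t, 2 * e, hY, by rw [h5, h6]; ring, by linarith, by simpa using he0⟩
    · exact ⟨s, t, -(2 * e), by rw [← hY]; ring, by rw [h5, h6]; ring, by linarith, by simpa using he0⟩
    · exact ⟨s, t, -(2 * e), by rw [← hY]; ring, by rw [h5, h6]; ring, by linarith, by simpa using he0⟩
    · exact ⟨s, t, 2 * e, hY, by rw [h5, h6]; ring, by linarith, by simpa using he0⟩

theorem type_two (e c β : ℤ) (hec : IsCoprime e c) (h17 : ¬ (17 : ℤ) ∣ β)
    (h : β ^ 2 = 289 * c ^ 4 + 17 * c ^ 2 * e ^ 2 - e ^ 4) :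
    ∃ s t v : ℤ, 17 * v ^ 2 = s ^ 4 - 2 * s ^ 2 * t ^ 2 + 5 * t ^ 4 ∧
      e * c * (s ^ 4 - 5 * t ^ 4) = 2 * v * s * t * β ∧ v ^ 2 ≤ 4 * c ^ 2 ∧ v ≠ 0 := by
  have hc0 : c ≠ 0 := by
    rintro rfl
    have : IsUnit e := isCoprime_zero_right.mp hec
    nlinarith [sq_nonneg β, sq_nonneg (e^2 - 1), Int.isUnit_iff.mp this, Int.isUnit_sq this]
  have hcpos : 0 < c ^ 2 := by positivity
  have hfour : ∀ ℓ M N : ℤ, Prime ℓ → ℓ ∣ M → ℓ ∣ N → ℓ ∣ e → ¬ (17 : ℤ) ∣ ℓ → ℓ ∣ 17 * c ^ 2 → False := by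
    intro ℓ M N hℓ h1 h2 h3 h4 h5
    rcases hℓ.dvd_or_dvd h5 with h6 | h6
    · exact h4 (hℓ.associated_of_dvd p17 h6).symm.dvd
    · exact hℓ.not_isUnit (hec.isUnit_of_dvd' h3 (hℓ.dvd_of_dvd_pow h6))
  by_cases hce : (2 : ℤ) ∣ e
  · obtain ⟨k, rfl⟩ := hce
    have hcodd : Odd c := by
      rw [← Int.not_even_iff_odd]
      intro hev
      exact two_prime.not_isUnit (hec.isUnit_of_dvd' (Dvd.intro _ rfl) hev.two_dvd)
    have hbodd : Odd β := by
      have : Odd (β ^ 2) := by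
        rw [h]
        obtain ⟨m, rfl⟩ := hcodd
        exact ⟨289 * (8 * m ^ 4 + 16 * m ^ 3 + 12 * m ^ 2 + 4 * m) + 144
          + 34 * (2 * m + 1) ^ 2 * k ^ 2 - 8 * k ^ 4, by ring⟩
      exact (Int.odd_pow.mp this).resolve_right (by norm_num)
    obtain ⟨M, hM⟩ : ∃ M, 17 * c ^ 2 + 2 * k ^ 2 - β = 2 * M := by
      obtain ⟨m, rfl⟩ := hcodd
      obtain ⟨n, rfl⟩ := hbodd
      exact ⟨34 * m ^ 2 + 34 * m + 8 + k ^ 2 - n, by ring⟩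
    obtain ⟨N, hN⟩ : ∃ N, N = M + β := ⟨_, rfl⟩
    have hMN : M * N = 5 * k ^ 4 := by
      have : (2 * M) * (2 * M + 2 * β) = 4 * (5 * k ^ 4) := by
        rw [← hM]; linear_combination -h
      rw [hN]; linarith
    have hsum : M + N = 17 * c ^ 2 + 2 * k ^ 2 := by rw [hN]; linarith
    have hβ : β = N - M := by rw [hN]; ring
    have hcop : IsCoprime M N := by
      apply coprime_of_prime_sq M N 5 k p5.irreducible.squarefree hMN
      · rw [hsum]; positivity
      · intro ℓ hℓ h1 h2 h3
        apply hfour ℓ M N hℓ h1 h2 (h3.mul_left 2)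
        · intro h4
          apply h17
          rw [hβ]
          exact h4.trans (dvd_sub h2 h1)
        · have : 17 * c ^ 2 = M + N - k * (2 * k) := by rw [hsum]; ring
          rw [this]
          exact dvd_sub (dvd_add h1 h2) (h3.mul_right _)
    obtain ⟨hM0, hN0⟩ := nonneg_pair M N (by rw [hsum]; positivity) (by rw [hMN]; positivity)
    obtain ⟨s, t, hA, h2⟩ := five_factors M N k hcop hM0 hN0 hMN
    have hk2 : k ^ 2 = s ^ 2 * t ^ 2 := by
      rcases h2 with rfl | rfl <;> ring
    have hY : 17 * c ^ 2 = s ^ 4 - 2 * s ^ 2 * t ^ 2 + 5 * t ^ 4 := by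
      rcases hA with ⟨a, b⟩ | ⟨a, b⟩ <;> rw [a, b] at hsum <;> linear_combination -hsum - 2 * hk2
    have hβ2 : s ^ 4 - 5 * t ^ 4 = β ∨ s ^ 4 - 5 * t ^ 4 = - β := by
      rcases hA with ⟨a, b⟩ | ⟨a, b⟩ <;> rw [a, b] at hβ
      · right; linarith
      · left; linarith
    rcases hβ2 with h5 | h5 <;> rcases h2 with h6 | h6
    · exact ⟨s, t, c, hY, by rw [h5, h6]; ring, by linarith, by simpa using hc0⟩
    · exact ⟨s, t, -c, by rw [← hY]; ring, by rw [h5, h6]; ring, by linarith, by simpa using hc0⟩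
    · exact ⟨s, t, -c, by rw [← hY]; ring, by rw [h5, h6]; ring, by linarith, by simpa using hc0⟩
    · exact ⟨s, t, c, hY, by rw [h5, h6]; ring, by linarith, by simpa using hc0⟩
  · obtain ⟨M, hM⟩ : ∃ M, M = 34 * c ^ 2 + e ^ 2 - 2 * β := ⟨_, rfl⟩
    obtain ⟨N, hN⟩ : ∃ N, N = 34 * c ^ 2 + e ^ 2 + 2 * β := ⟨_, rfl⟩
    have hMN : M * N = 5 * e ^ 4 := by
      rw [hM, hN]; linear_combination -4 * h
    have hsum : M + N = 68 * c ^ 2 + 2 * e ^ 2 := by rw [hM, hN]; ring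
    have hβ : 4 * β = N - M := by rw [hN, hM]; ring
    have hModd : ¬ (2 : ℤ) ∣ M := by
      rw [hM]
      intro h1
      apply hce
      apply two_prime.dvd_of_dvd_pow (n := 2)
      have : e ^ 2 = (34 * c ^ 2 + e ^ 2 - 2 * β) + 2 * (β - 17 * c ^ 2) := by ring
      rw [this]
      exact dvd_add h1 (Dvd.intro _ rfl)
    have hcop : IsCoprime M N := by
      apply coprime_of_prime_sq M N 5 e p5.irreducible.squarefree hMN
      · rw [hsum]; positivity
      · intro ℓ hℓ h1 h2 h3
        have hl2 := not_two_of_odd_prod ℓ M hℓ h1 hModd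
        apply hfour ℓ M N hℓ h1 h2 h3
        · intro h4
          apply h17
          have : (17 : ℤ) ∣ 4 * β := by rw [hβ]; exact h4.trans (dvd_sub h2 h1)
          omega
        · apply dvd_of_two_mul ℓ _ hℓ hl2
          apply dvd_of_two_mul ℓ _ hℓ hl2
          have : 2 * (2 * (17 * c ^ 2)) = M + N - e * (2 * e) := by rw [hsum]; ring
          rw [this]
          exact dvd_sub (dvd_add h1 h2) (h3.mul_right _)
    obtain ⟨hM0, hN0⟩ := nonneg_pair M N (by rw [hsum]; positivity) (by rw [hMN]; positivity)
    obtain ⟨s, t, hA, h2⟩ := five_factors M N e hcop hM0 hN0 hMN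
    have hk2 : e ^ 2 = s ^ 2 * t ^ 2 := by
      rcases h2 with rfl | rfl <;> ring
    have hY : 17 * (2 * c) ^ 2 = s ^ 4 - 2 * s ^ 2 * t ^ 2 + 5 * t ^ 4 := by
      rcases hA with ⟨a, b⟩ | ⟨a, b⟩ <;> rw [a, b] at hsum <;> linear_combination -hsum - 2 * hk2
    have hβ2 : s ^ 4 - 5 * t ^ 4 = 4 * β ∨ s ^ 4 - 5 * t ^ 4 = - (4 * β) := by
      rcases hA with ⟨a, b⟩ | ⟨a, b⟩ <;> rw [a, b] at hβ
      · right; linarith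
      · left; linarith
    rcases hβ2 with h5 | h5 <;> rcases h2 with h6 | h6
    · exact ⟨s, t, 2 * c, hY, by rw [h5, h6]; ring, by linarith, by simpa using hc0⟩
    · exact ⟨s, t, -(2 * c), by rw [← hY]; ring, by rw [h5, h6]; ring, by linarith, by simpa using hc0⟩
    · exact ⟨s, t, -(2 * c), by rw [← hY]; ring, by rw [h5, h6]; ring, by linarith, by simpa using hc0⟩
    · exact ⟨s, t, 2 * c, hY, by rw [h5, h6]; ring, by linarith, by simpa using hc0⟩


namespace JQ

theorem base_check : ∀ s ∈ Finset.Icc (-9 : ℤ) 9, ∀ t ∈ Finset.Icc (-5 : ℤ) 5,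
    ∀ v ∈ Finset.Icc (-15 : ℤ) 15, 17 * v ^ 2 = s ^ 4 - 2 * s ^ 2 * t ^ 2 + 5 * t ^ 4 →
    38 * v * s * t = 3 * (s ^ 4 - 5 * t ^ 4) ∨ 38 * v * s * t = -(3 * (s ^ 4 - 5 * t ^ 4)) := by
  decide +kernel

theorem Y0_sq (s t v : ℤ) (h : 17 * v ^ 2 = s ^ 4 - 2 * s ^ 2 * t ^ 2 + 5 * t ^ 4) :
    (34 * v * (9 * s ^ 2 + 5 * t ^ 2) + 24 * s * t * (s ^ 2 - 10 * t ^ 2)) ^ 2 =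
    (5 * t ^ 2 - 9 * s ^ 2) ^ 4 - 34 * (2 * s * t - 3 * v) ^ 2 * (5 * t ^ 2 - 9 * s ^ 2) ^ 2
      + 1445 * (2 * s * t - 3 * v) ^ 4 := by
  grind

theorem Y0_bound (s t v : ℤ) (h : 17 * v ^ 2 = s ^ 4 - 2 * s ^ 2 * t ^ 2 + 5 * t ^ 4) :
    |34 * v * (9 * s ^ 2 + 5 * t ^ 2) + 24 * s * t * (s ^ 2 - 10 * t ^ 2)| ≤ 250 * (17 * v ^ 2) := by
  have hA : (9 * s ^ 2 + 5 * t ^ 2) ^ 2 ≤ 256 * (17 * v ^ 2) := by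
    rw [h]; nlinarith [sq_nonneg (175 * s ^ 2 - 301 * t ^ 2), sq_nonneg (t ^ 2), sq_nonneg (s^2)]
  have hB : (s ^ 2 - 10 * t ^ 2) ^ 2 ≤ 26 * (17 * v ^ 2) := by
    rw [h]; nlinarith [sq_nonneg (25 * s ^ 2 - 16 * t ^ 2), sq_nonneg (t ^ 2), sq_nonneg (s^2)]
  have hC : (s * t) ^ 2 ≤ 17 * v ^ 2 := by
    rw [h]; nlinarith [sq_nonneg (2 * s ^ 2 - 3 * t ^ 2), sq_nonneg (t ^ 2), sq_nonneg (s^2)]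
  rw [abs_le]
  constructor
  · nlinarith [sq_nonneg (66 * v + 17 * (9 * s ^ 2 + 5 * t ^ 2) / 1), sq_nonneg (4 * v + (9 * s ^ 2 + 5 * t ^ 2)),
      sq_nonneg (5 * (s * t) + (s ^ 2 - 10 * t ^ 2))]
  · nlinarith [sq_nonneg (66 * v - 17 * (9 * s ^ 2 + 5 * t ^ 2) / 1), sq_nonneg (4 * v - (9 * s ^ 2 + 5 * t ^ 2)),
      sq_nonneg (5 * (s * t) - (s ^ 2 - 10 * t ^ 2))]

/-- integral representation of a point -/
def Rep (g : JQ) (α β Y : ℤ) : Prop := β ≠ 0 ∧ g.w = α / β ∧ g.y = Y / β ^ 2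

theorem Rep.eqn {g : JQ} {α β Y : ℤ} (h : Rep g α β Y) :
    Y ^ 2 = β ^ 4 - 34 * α ^ 2 * β ^ 2 + 1445 * α ^ 4 ∧ 0 < Y := by
  obtain ⟨h0, h1, h2⟩ := h
  have hb : (β : ℚ) ≠ 0 := by exact_mod_cast h0
  have e := g.eq
  rw [h1, h2] at e
  field_simp at e
  constructor
  · have : (Y : ℚ) ^ 2 = β ^ 4 - 34 * α ^ 2 * β ^ 2 + 1445 * α ^ 4 := by linear_combination e
    exact_mod_cast this
  · have p := g.pos
    rw [h2] at p
    have : 0 < (Y : ℚ) := by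
      by_contra hn
      push Not at hn
      have : (Y : ℚ) / β ^ 2 ≤ 0 := div_nonpos_of_nonpos_of_nonneg hn (by positivity)
      linarith
    exact_mod_cast this

theorem Rep.reduce {g : JQ} {α β Y : ℤ} (h : Rep g α β Y) :
    ∃ α' β' Y' : ℤ, Rep g α' β' Y' ∧ IsCoprime α' β' ∧ Y' ≤ Y := by
  obtain ⟨he, hY⟩ := h.eqn
  obtain ⟨h0, h1, h2⟩ := h
  obtain ⟨a, b, hab, ha, hb⟩ : ∃ a b : ℤ, IsCoprime a b ∧ α = a * (Int.gcd α β) ∧ β = b * (Int.gcd α β) := by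
    have hg : 0 < Int.gcd α β := Int.gcd_pos_of_ne_zero_right _ h0
    obtain ⟨a, b, c1, c2, c3⟩ := Int.exists_gcd_one hg
    exact ⟨a, b, Int.isCoprime_iff_gcd_eq_one.mpr c1, c2, c3⟩
  obtain ⟨d, hd⟩ : ∃ d : ℤ, d = (Int.gcd α β : ℤ) := ⟨_, rfl⟩
  rw [← hd] at ha hb
  have hd0 : d ≠ 0 := by rintro rfl; apply h0; rw [hb]; ring
  have hb0 : b ≠ 0 := by rintro rfl; apply h0; rw [hb]; ring
  have hdv : (d ^ 2) ^ 2 ∣ Y ^ 2 := ⟨b ^ 4 - 34 * a ^ 2 * b ^ 2 + 1445 * a ^ 4, by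
    rw [he, ha, hb]; ring⟩
  rw [Int.pow_dvd_pow_iff two_ne_zero] at hdv
  obtain ⟨Y', rfl⟩ := hdv
  have hdq : (d : ℚ) ≠ 0 := by exact_mod_cast hd0
  have hbq : (b : ℚ) ≠ 0 := by exact_mod_cast hb0
  refine ⟨a, b, Y', ⟨hb0, ?_, ?_⟩, hab, ?_⟩
  · rw [h1, ha, hb]; push_cast; field_simp
  · rw [h2, hb]; push_cast; field_simp
  · have : 0 < d ^ 2 := by positivity
    have h3 : 0 < Y' := by
      by_contra hn
      push Not at hn
      nlinarith
    nlinarith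

theorem exists_rep (g : JQ) : ∃ α β Y : ℤ, Rep g α β Y ∧ IsCoprime α β := by
  obtain ⟨w, y, e, p⟩ := g
  have hd : (w.den : ℚ) ≠ 0 := by exact_mod_cast w.den_nz
  have hw : w = w.num / w.den := (Rat.num_div_den w).symm
  have h1 : (y * w.den ^ 2) ^ 2 =
      (((w.den : ℤ) ^ 4 - 34 * w.num ^ 2 * (w.den : ℤ) ^ 2 + 1445 * w.num ^ 4 : ℤ) : ℚ) := by
    push_cast
    have : w * w.den = w.num := Rat.mul_den_eq_num w
    rw [← this, mul_pow, e]; ring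
  have h2 : IsSquare (((w.den : ℤ) ^ 4 - 34 * w.num ^ 2 * (w.den : ℤ) ^ 2 + 1445 * w.num ^ 4 : ℤ) : ℚ) :=
    ⟨y * w.den ^ 2, by rw [← h1]; ring⟩
  rw [Rat.isSquare_intCast_iff] at h2
  obtain ⟨k, hk⟩ := h2
  rw [hk] at h1
  have hab : IsCoprime w.num (w.den : ℤ) := Rat.isCoprime_num_den w
  have h3 : (y * w.den ^ 2) ^ 2 = (k : ℚ) ^ 2 := by rw [h1]; push_cast; ring
  have hdz : (w.den : ℤ) ≠ 0 := by exact_mod_cast w.den_nz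
  rcases sq_eq_sq_iff_eq_or_eq_neg.mp h3 with h4 | h4
  · refine ⟨w.num, w.den, k, ⟨hdz, ?_, ?_⟩, hab⟩
    · simpa using hw
    · simp only [Int.cast_natCast]
      rw [← h4]; field_simp
  · refine ⟨w.num, w.den, -k, ⟨hdz, ?_, ?_⟩, hab⟩
    · simpa using hw
    · simp only [Int.cast_natCast]
      push_cast
      rw [← h4]; field_simp

theorem eq_of_frac (g : JQ) (x : JQ) (a b : ℚ) (hb : b ≠ 0) (h : g.w = a / b) (h2 : x.w * b = a) :
    g = x := by
  apply ext'
  rw [h, ← h2]; field_simp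

theorem dbl_w (s t Y : ℚ) (hs : s ≠ 0) (hden : s ^ 4 - 1445 * t ^ 4 ≠ 0) (S : JQ) (h1 : S.w = t / s)
    (h2 : S.y = Y / s ^ 2) : (S + S).w = 2 * s * t * Y / (s ^ 4 - 1445 * t ^ 4) := by
  rw [add_w, h1, h2]
  have e : 1 - 1445 * (t / s) ^ 2 * (t / s) ^ 2 = (s ^ 4 - 1445 * t ^ 4) / s ^ 4 := by
    field_simp
  rw [e]
  field_simp
  ring

theorem dbl_y (s t Y : ℚ) (hs : s ≠ 0) (hden : s ^ 4 - 1445 * t ^ 4 ≠ 0) (S : JQ) (h1 : S.w = t / s)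
    (h2 : S.y = Y / s ^ 2) : (S + S).y =
      ((s ^ 4 + 1445 * t ^ 4) * (Y ^ 2 - 34 * t ^ 2 * s ^ 2) + 4 * 1445 * t ^ 4 * s ^ 4) /
        (s ^ 4 - 1445 * t ^ 4) ^ 2 := by
  rw [add_y, h1, h2]
  have e : 1 - 1445 * (t / s) ^ 2 * (t / s) ^ 2 = (s ^ 4 - 1445 * t ^ 4) / s ^ 4 := by
    field_simp
  rw [e]
  field_simp
  ring

theorem quart_ne (s t : ℚ) (hs : s ≠ 0) : s ^ 4 - 1445 * t ^ 4 ≠ 0 := by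
  intro h
  apply den_ne (t / s) (t / s)
  field_simp
  linarith

theorem quart5_ne (s t : ℚ) (hs : s ≠ 0) : s ^ 4 - 5 * t ^ 4 ≠ 0 := by
  intro h
  apply five_not_sq ((t / s) ^ 2)
  field_simp
  linarith

theorem key_II (s t v : ℚ) (h : 17 * v ^ 2 = s ^ 4 - 2 * s ^ 2 * t ^ 2 + 5 * t ^ 4)
    (E W Y A B D : ℚ) (hE : E = 5 * t ^ 2 - 9 * s ^ 2) (hW : W = 2 * s * t - 3 * v)
    (hY : Y = 34 * v * (9 * s ^ 2 + 5 * t ^ 2) + 24 * s * t * (s ^ 2 - 10 * t ^ 2))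
    (hD : D = E ^ 4 - 1445 * W ^ 4) (hA : A = 2 * E * W * Y)
    (hB : B = (E ^ 4 + 1445 * W ^ 4) * (Y ^ 2 - 34 * W ^ 2 * E ^ 2) + 4 * 1445 * W ^ 4 * E ^ 4) :
    (370 * A * D - 57 * B) * (s ^ 4 - 5 * t ^ 4) = -2 * v * s * t * (361 * D ^ 2 - 13005 * A ^ 2) := by
  subst hE hW hY hD hA hB
  grind
end JQ

namespace JQ

theorem stepI (g : JQ) (e c β s t Y : ℤ) (hβ : β ≠ 0) (hec : e * c ≠ 0)
    (hw : g.w = (e * c : ℤ) / β)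
    (h1 : Y ^ 2 = s ^ 4 - 34 * s ^ 2 * t ^ 2 + 1445 * t ^ 4)
    (h2 : e * c * (s ^ 4 - 1445 * t ^ 4) = 2 * s * t * Y * β) (hY : 0 < Y) :
    ∃ S : JQ, Rep S t s Y ∧ g = S + S := by
  have hs : s ≠ 0 := by
    rintro rfl
    have h3 : e * c * (1445 * t ^ 4) = 0 := by linear_combination -h2
    have h4 : t = 0 := by
      have := (mul_eq_zero.mp h3).resolve_left hec
      have : t ^ 4 = 0 := by linarith
      exact pow_eq_zero_iff (by norm_num) |>.mp this
    rw [h4] at h1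
    nlinarith
  have hsq : (s : ℚ) ≠ 0 := by exact_mod_cast hs
  have hbq : (β : ℚ) ≠ 0 := by exact_mod_cast hβ
  have hYq : (0 : ℚ) < Y := by exact_mod_cast hY
  have h1q : (Y : ℚ) ^ 2 = s ^ 4 - 34 * s ^ 2 * t ^ 2 + 1445 * t ^ 4 := by exact_mod_cast h1
  have h2q : (e : ℚ) * c * (s ^ 4 - 1445 * t ^ 4) = 2 * s * t * Y * β := by exact_mod_cast h2
  have hq := quart_ne s t hsq
  let S : JQ := ⟨t / s, Y / s ^ 2, by rw [div_pow, h1q]; field_simp, by positivity⟩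
  refine ⟨S, ⟨hs, rfl, rfl⟩, ?_⟩
  apply ext'
  rw [dbl_w s t Y hsq hq S rfl rfl, hw]
  push_cast
  rw [div_eq_div_iff hbq hq]
  linear_combination h2q

theorem stepII (g : JQ) (e c β s t v : ℤ) (hβ : β ≠ 0) (hec : e * c ≠ 0)
    (hw : g.w = (e * c : ℤ) / β)
    (h1 : 17 * v ^ 2 = s ^ 4 - 2 * s ^ 2 * t ^ 2 + 5 * t ^ 4)
    (h2 : e * c * (s ^ 4 - 5 * t ^ 4) = 2 * v * s * t * β) (hv : v ≠ 0) :
    ∃ S : JQ, (∃ a b Y, Rep S a b Y ∧ Y ≤ 250 * (17 * v ^ 2)) ∧ g = Q - (S + S) := by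
  have hvp : 0 < v ^ 2 := by positivity
  have hst : s ≠ 0 := by
    rintro rfl
    have h3 : e * c * (5 * t ^ 4) = 0 := by linear_combination -h2
    have h4 : t = 0 := by
      have := (mul_eq_zero.mp h3).resolve_left hec
      have : t ^ 4 = 0 := by linarith
      exact pow_eq_zero_iff (by norm_num) |>.mp this
    rw [h4] at h1
    nlinarith
  have hsq : (s : ℚ) ≠ 0 := by exact_mod_cast hst
  have hbq : (β : ℚ) ≠ 0 := by exact_mod_cast hβ
  have h1q : 17 * (v : ℚ) ^ 2 = s ^ 4 - 2 * s ^ 2 * t ^ 2 + 5 * t ^ 4 := by exact_mod_cast h1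
  have h2q : (e : ℚ) * c * (s ^ 4 - 5 * t ^ 4) = 2 * v * s * t * β := by exact_mod_cast h2
  have hq5 := quart5_ne s t hsq
  obtain ⟨E, hE⟩ : ∃ E : ℤ, E = 5 * t ^ 2 - 9 * s ^ 2 := ⟨_, rfl⟩
  obtain ⟨W, hW⟩ : ∃ W : ℤ, W = 2 * s * t - 3 * v := ⟨_, rfl⟩
  obtain ⟨Y, hY⟩ : ∃ Y : ℤ, Y = 34 * v * (9 * s ^ 2 + 5 * t ^ 2) + 24 * s * t * (s ^ 2 - 10 * t ^ 2) := ⟨_, rfl⟩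
  have hYs := Y0_sq s t v h1
  have hYb := Y0_bound s t v h1
  rw [← hE, ← hW, ← hY] at hYs
  rw [← hY] at hYb
  have hEq : (E : ℚ) = 5 * t ^ 2 - 9 * s ^ 2 := by rw [hE]; push_cast; ring
  have hE0q : (E : ℚ) ≠ 0 := by
    rw [hEq]
    intro h
    apply five_not_sq (t / (3 * s))
    field_simp
    linear_combination h
  have hE0 : E ≠ 0 := by exact_mod_cast hE0q
  have hYsq : (Y : ℚ) ^ 2 = E ^ 4 - 34 * W ^ 2 * E ^ 2 + 1445 * W ^ 4 := by exact_mod_cast hYs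
  have hEp : (0 : ℚ) < E ^ 2 := by positivity
  have hY0q : (Y : ℚ) ≠ 0 := by
    intro h
    rw [h] at hYsq
    nlinarith [sq_nonneg ((W : ℚ) ^ 2 * 85 - E ^ 2), mul_pos hEp hEp]
  have hq := quart_ne E W hE0q
  have key := key_II s t v h1q E W Y _ _ _ hEq (by rw [hW]; push_cast; ring)
    (by rw [hY]; push_cast; ring) rfl rfl rfl
  -- finishing for any `S`
  have fin : ∀ (S : JQ) (ε : ℚ), ε ^ 2 = 1 → S.w = (ε * W) / E → S.y = (ε * Y) / E ^ 2 →
      g = Q - (S + S) := by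
    intro S ε hε hSw hSy
    have hε4 : ε ^ 4 = 1 := by
      have : ε ^ 4 = (ε ^ 2) ^ 2 := by ring
      rw [this, hε]; norm_num
    have hq' : (E : ℚ) ^ 4 - 1445 * (ε * W) ^ 4 ≠ 0 := by rw [mul_pow, hε4, one_mul]; exact hq
    have d1 := dbl_w E (ε * W) (ε * Y) hE0q hq' S hSw hSy
    have d2 := dbl_y E (ε * W) (ε * Y) hE0q hq' S hSw hSy
    rw [show 2 * (E : ℚ) * (ε * W) * (ε * Y) = ε ^ 2 * (2 * E * W * Y) by ring, mul_pow, hε4, hε, one_mul, one_mul] at d1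
    simp only [mul_pow, hε4, hε, one_mul] at d2
    obtain ⟨A, hA⟩ : ∃ A : ℚ, A = 2 * E * W * Y := ⟨_, rfl⟩
    obtain ⟨D, hD⟩ : ∃ D : ℚ, D = (E : ℚ) ^ 4 - 1445 * W ^ 4 := ⟨_, rfl⟩
    obtain ⟨B, hB⟩ : ∃ B : ℚ, B = ((E : ℚ) ^ 4 + 1445 * W ^ 4) * (Y ^ 2 - 34 * W ^ 2 * E ^ 2)
      + 4 * 1445 * W ^ 4 * E ^ 4 := ⟨_, rfl⟩
    rw [← hA, ← hB, ← hD] at key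
    rw [← hA, ← hD] at d1
    rw [← hB, ← hD] at d2
    rw [← hD] at hq
    have hdn := den_ne Q.w (-(S + S)).w
    apply ext'
    rw [hw, sub_eq_add_neg, add_w]
    have hQw : Q.w = 3 / 19 := rfl
    have hQy : Q.y = 370 / 361 := rfl
    rw [eq_div_iff hdn]
    rw [neg_w, neg_y, d1, d2, hQw, hQy]
    push_cast
    have h3 : (e : ℚ) * c / β = 2 * v * s * t / (s ^ 4 - 5 * t ^ 4) := by
      rw [div_eq_div_iff hbq hq5]; exact h2q
    rw [h3]
    obtain ⟨F, hF⟩ : ∃ F : ℚ, F = (s : ℚ) ^ 4 - 5 * t ^ 4 := ⟨_, rfl⟩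
    rw [← hF] at key hq5 ⊢
    field_simp
    linear_combination 361 * key
  rcases lt_or_gt_of_ne hY0q with hneg | hpos
  · let S : JQ := ⟨(-1 * W) / E, (-1 * Y) / E ^ 2, by
      rw [div_pow, mul_pow, hYsq]; field_simp, div_pos (by linarith) hEp⟩
    refine ⟨S, ⟨-W, E, -Y, ⟨hE0, ?_, ?_⟩, ?_⟩, fin S (-1) (by norm_num) rfl rfl⟩
    · change (-1 * (W : ℚ)) / E = _
      push_cast; ring
    · change (-1 * (Y : ℚ)) / E ^ 2 = _
      push_cast; ring
    · linarith [(abs_le.mp hYb).1]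
  · let S : JQ := ⟨W / E, Y / E ^ 2, by
      rw [div_pow, hYsq]; field_simp, div_pos hpos hEp⟩
    refine ⟨S, ⟨W, E, Y, ⟨hE0, rfl, rfl⟩, (abs_le.mp hYb).2⟩, fin S 1 (by norm_num) ?_ ?_⟩
    · change (W : ℚ) / E = _
      ring
    · change (Y : ℚ) / E ^ 2 = _
      ring

theorem mw_aux (n : ℕ) : ∀ (g : JQ) (α β Y : ℤ), Rep g α β Y → IsCoprime α β → Y ≤ n →
    ∃ m : ℤ, g = m • Q := by
  induction n with
  | zero =>
    intro g α β Y hr _ hY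
    have := hr.eqn.2
    exfalso
    push_cast at hY
    linarith
  | succ n ih =>
    have ih' : ∀ (g : JQ) (α β Y : ℤ), Rep g α β Y → Y ≤ n → ∃ m : ℤ, g = m • Q := by
      intro g α β Y hr hY
      obtain ⟨a, b, Y', h1, h2, h3⟩ := hr.reduce
      exact ih g a b Y' h1 h2 (by linarith)
    intro g α β Y hr hc hY
    obtain ⟨heq, hYp⟩ := hr.eqn
    have h17 := not17 α β Y hc heq
    obtain ⟨hβ, hw, hy⟩ := hr
    obtain ⟨e, c, hα, hec, hYe, hcase⟩ := first_descent α β Y hc hYp heq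
    by_cases hα0 : e * c = 0
    · refine ⟨0, ?_⟩
      apply ext'
      rw [zero_smul, zero_w, hw, hα, hα0]
      simp
    rw [hα] at hw
    have he0 : e ≠ 0 := left_ne_zero_of_mul hα0
    have hc0 : c ≠ 0 := right_ne_zero_of_mul hα0
    have hep : 1 ≤ e ^ 2 := by
      have : 0 < e ^ 2 := by positivity
      linarith
    have hcp : 1 ≤ c ^ 2 := by
      have : 0 < c ^ 2 := by positivity
      linarith
    rcases hcase with h1 | h1
    · obtain ⟨s, t, Z, h2, h3, h4, h5⟩ := type_one e c β hec h17 h1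
      obtain ⟨s, t, Z, h2, h3, h4, h5⟩ : ∃ s t Y : ℤ, Y ^ 2 = s ^ 4 - 34 * s ^ 2 * t ^ 2 + 1445 * t ^ 4 ∧
        e * c * (s ^ 4 - 1445 * t ^ 4) = 2 * s * t * Y * β ∧ Y ^ 2 ≤ 4 * e ^ 2 ∧ 0 < Y := by
        rcases lt_or_gt_of_ne h5 with h6 | h6
        · exact ⟨s, -t, -Z, by rw [neg_sq, h2]; ring, by linear_combination h3, by linarith, by linarith⟩
        · exact ⟨s, t, Z, h2, h3, h4, h6⟩
      obtain ⟨S, hS, hg⟩ := stepI g e c β s t Z hβ hα0 hw h2 h3 h5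
      have hZ : Z < Y := by
        rw [hYe]
        have : Z ≤ e ^ 2 + 1 := by
          apply le_of_sq_le_sq _ (by positivity)
          nlinarith [sq_nonneg (e ^ 2 - 1)]
        nlinarith
      obtain ⟨m, hm⟩ := ih' S _ _ _ hS (by push_cast at hY; linarith)
      exact ⟨m + m, by rw [hg, hm, add_smul]⟩
    · obtain ⟨s, t, v, h2, h3, h4, h5⟩ := type_two e c β hec h17 h1
      by_cases hbig : 17 * v ^ 2 ≤ 4000
      · have hs : -9 ≤ s ∧ s ≤ 9 := by
          constructor <;> by_contra hn <;> push Not at hn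
          · have : 100 ≤ s ^ 2 := by nlinarith
            nlinarith [sq_nonneg (s ^ 2 - 5 * t ^ 2)]
          · have : 100 ≤ s ^ 2 := by nlinarith
            nlinarith [sq_nonneg (s ^ 2 - 5 * t ^ 2)]
        have ht : -5 ≤ t ∧ t ≤ 5 := by
          constructor <;> by_contra hn <;> push Not at hn
          · have : 36 ≤ t ^ 2 := by nlinarith
            nlinarith [sq_nonneg (s ^ 2 - t ^ 2)]
          · have : 36 ≤ t ^ 2 := by nlinarith
            nlinarith [sq_nonneg (s ^ 2 - t ^ 2)]
        have hv : -15 ≤ v ∧ v ≤ 15 := by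
          constructor <;> nlinarith
        have h6 := base_check s (Finset.mem_Icc.mpr hs) t (Finset.mem_Icc.mpr ht) v
          (Finset.mem_Icc.mpr hv) h2
        have hs0 : (s : ℚ) ≠ 0 := by
          intro hs0
          have hs0 : s = 0 := by exact_mod_cast hs0
          subst hs0
          have h3' : e * c * (5 * t ^ 4) = 0 := by linear_combination -h3
          have h4 : t = 0 := by
            have := (mul_eq_zero.mp h3').resolve_left hα0
            have : t ^ 4 = 0 := by linarith
            exact pow_eq_zero_iff (by norm_num) |>.mp this
          rw [h4] at h2
          have : 0 < v ^ 2 := by positivity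
          nlinarith
        have hq5 := quart5_ne s t hs0
        have hbq : (β : ℚ) ≠ 0 := by exact_mod_cast hβ
        have h3q : (e : ℚ) * c * (s ^ 4 - 5 * t ^ 4) = 2 * v * s * t * β := by exact_mod_cast h3
        have hw' : g.w = 2 * v * s * t / (s ^ 4 - 5 * t ^ 4) := by
          rw [hw]; push_cast; rw [div_eq_div_iff hbq hq5]; exact h3q
        rcases h6 with h6 | h6
        · have h6q : (38 : ℚ) * v * s * t = 3 * (s ^ 4 - 5 * t ^ 4) := by exact_mod_cast h6
          refine ⟨1, ?_⟩
          apply ext'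
          rw [one_smul, hw', div_eq_iff hq5]
          change _ = (3 / 19 : ℚ) * _
          linear_combination (1 / 19) * h6q
        · have h6q : (38 : ℚ) * v * s * t = -(3 * (s ^ 4 - 5 * t ^ 4)) := by exact_mod_cast h6
          refine ⟨-1, ?_⟩
          apply ext'
          rw [neg_smul, one_smul, hw', div_eq_iff hq5, neg_w]
          change _ = -(3 / 19 : ℚ) * _
          linear_combination (1 / 19) * h6q
      · obtain ⟨S, ⟨a, b, Z, hS, hZ⟩, hg⟩ := stepII g e c β s t v hβ hα0 hw h2 h3 h5
        have hZY : Z < Y := by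
          push Not at hbig
          rw [hYe]
          have h7 : (17 * v ^ 2) ^ 2 ≤ 16 * (289 * c ^ 4) := by
            have : (v ^ 2) ^ 2 ≤ (4 * c ^ 2) ^ 2 := by gcongr
            nlinarith
          nlinarith
        obtain ⟨m, hm⟩ := ih' S _ _ _ hS (by push_cast at hY; linarith)
        exact ⟨1 - (m + m), by rw [hg, hm, sub_smul, add_smul, one_smul]⟩

theorem mw (g : JQ) : ∃ m : ℤ, g = m • Q := by
  obtain ⟨α, β, Y, h, hc⟩ := exists_rep g
  exact mw_aux Y.toNat g α β Y h hc (Int.self_le_toNat Y)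
end JQ

namespace JQ

/-- `g` reduces to the affine point `(a, b)` modulo `p`. -/
def Red (p : ℕ) (g : JQ) (a b : ZMod p) : Prop :=
  ∃ α β Y : ℤ, Rep g α β Y ∧ (β : ZMod p) ≠ 0 ∧ (α : ZMod p) = a * β ∧ (Y : ZMod p) = b * β ^ 2

theorem Red_add (p : ℕ) [Fact p.Prime] (g1 g2 : JQ) (a1 b1 a2 b2 a b : ZMod p)
    (h1 : Red p g1 a1 b1) (h2 : Red p g2 a2 b2) (hD : 1 - 1445 * a1 ^ 2 * a2 ^ 2 ≠ 0)
    (ha : a * (1 - 1445 * a1 ^ 2 * a2 ^ 2) = a1 * b2 + b1 * a2)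
    (hb : b * (1 - 1445 * a1 ^ 2 * a2 ^ 2) ^ 2 = (1 + 1445 * a1 ^ 2 * a2 ^ 2) *
      (b1 * b2 - 34 * a1 * a2) + 2 * 1445 * a1 * a2 * (a1 ^ 2 + a2 ^ 2)) :
    Red p (g1 + g2) a b := by
  obtain ⟨α1, β1, Y1, ⟨hβ1, hw1, hy1⟩, hb1, ha1, hY1⟩ := h1
  obtain ⟨α2, β2, Y2, ⟨hβ2, hw2, hy2⟩, hb2, ha2, hY2⟩ := h2
  have hdn := den_ne g1.w g2.w
  have hq1 : (β1 : ℚ) ≠ 0 := by exact_mod_cast hβ1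
  have hq2 : (β2 : ℚ) ≠ 0 := by exact_mod_cast hβ2
  have hDe : 1 - 1445 * g1.w ^ 2 * g2.w ^ 2 =
      ((β1 : ℚ) ^ 2 * β2 ^ 2 - 1445 * α1 ^ 2 * α2 ^ 2) / (β1 ^ 2 * β2 ^ 2) := by
    rw [hw1, hw2]; field_simp
  have hΔ : (β1 : ℚ) ^ 2 * β2 ^ 2 - 1445 * α1 ^ 2 * α2 ^ 2 ≠ 0 := by
    intro h0
    rw [hDe, h0, zero_div] at hdn
    exact hdn rfl
  refine ⟨α1 * β1 * Y2 + Y1 * α2 * β2, β1 ^ 2 * β2 ^ 2 - 1445 * α1 ^ 2 * α2 ^ 2,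
    (β1 ^ 2 * β2 ^ 2 + 1445 * α1 ^ 2 * α2 ^ 2) * (Y1 * Y2 - 34 * α1 * α2 * β1 * β2)
      + 2 * 1445 * α1 * α2 * β1 * β2 * (α1 ^ 2 * β2 ^ 2 + α2 ^ 2 * β1 ^ 2), ⟨?_, ?_, ?_⟩, ?_, ?_, ?_⟩
  · exact_mod_cast hΔ
  · rw [add_w, hDe, hw1, hw2, hy1, hy2]
    push_cast
    obtain ⟨Δ, hΔ'⟩ : ∃ Δ : ℚ, Δ = (β1 : ℚ) ^ 2 * β2 ^ 2 - 1445 * α1 ^ 2 * α2 ^ 2 := ⟨_, rfl⟩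
    rw [← hΔ'] at hΔ ⊢
    field_simp
  · rw [add_y, hDe, hw1, hw2, hy1, hy2]
    push_cast
    obtain ⟨Δ, hΔ'⟩ : ∃ Δ : ℚ, Δ = (β1 : ℚ) ^ 2 * β2 ^ 2 - 1445 * α1 ^ 2 * α2 ^ 2 := ⟨_, rfl⟩
    rw [← hΔ'] at hΔ ⊢
    field_simp
    ring
  · push_cast
    rw [ha1, ha2]
    have : (β1 : ZMod p) ^ 2 * β2 ^ 2 - 1445 * (a1 * β1) ^ 2 * (a2 * β2) ^ 2
        = β1 ^ 2 * β2 ^ 2 * (1 - 1445 * a1 ^ 2 * a2 ^ 2) := by ring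
    rw [this]
    exact mul_ne_zero (mul_ne_zero (pow_ne_zero _ hb1) (pow_ne_zero _ hb2)) hD
  · push_cast
    rw [ha1, ha2, hY1, hY2]
    linear_combination (-(β1 : ZMod p) ^ 2 * β2 ^ 2) * ha
  · push_cast
    rw [ha1, ha2, hY1, hY2]
    linear_combination (-(β1 : ZMod p) ^ 4 * β2 ^ 4) * hb

theorem Red_neg (p : ℕ) (g : JQ) (a b : ZMod p) (h : Red p g a b) : Red p (-g) (-a) b := by
  obtain ⟨α, β, Y, ⟨hβ, hw, hy⟩, hb, ha, hY⟩ := h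
  refine ⟨-α, β, Y, ⟨hβ, ?_, ?_⟩, hb, ?_, hY⟩
  · rw [neg_w, hw]; push_cast; ring
  · rw [neg_y, hy]
  · push_cast; rw [ha]; ring

theorem Red_zero (p : ℕ) [Fact p.Prime] : Red p 0 0 1 :=
  ⟨0, 1, 1, ⟨one_ne_zero, by simp [zero_w], by simp [zero_y]⟩, by simp, by simp, by simp⟩

theorem Red_add_triv (p : ℕ) [Fact p.Prime] (g1 g2 : JQ) (a1 b1 b2 : ZMod p)
    (h1 : Red p g1 a1 b1) (h2 : Red p g2 0 b2) (hb2 : b2 ^ 2 = 1) :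
    Red p (g1 + g2) (a1 * b2) (b1 * b2) := by
  apply Red_add p g1 g2 a1 b1 0 b2 _ _ h1 h2 <;> simp

theorem Red_nsmul (p : ℕ) [Fact p.Prime] (g : JQ) (b : ZMod p) (hb : b ^ 2 = 1)
    (h : Red p g 0 b) (n : ℕ) : Red p (n • g) 0 (b ^ n) := by
  induction n with
  | zero => simpa using Red_zero p
  | succ n ih =>
    have := Red_add_triv p (n • g) g 0 (b ^ n) b ih h hb
    rw [succ_nsmul, pow_succ]
    simpa using this

theorem Red_zsmul (p : ℕ) [Fact p.Prime] (g : JQ) (h : Red p g 0 1) (n : ℤ) : Red p (n • g) 0 1 := by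
  obtain ⟨k, rfl | rfl⟩ := n.eq_nat_or_neg
  · have := Red_nsmul p g 1 (by simp) h k
    simpa using this
  · have := Red_neg p _ _ _ (Red_nsmul p g 1 (by simp) h k)
    simpa using this

theorem Red_period (p : ℕ) [Fact p.Prime] (m r j : ℤ) (a b : ZMod p) (h : Red p (m • Q) 0 1)
    (hr : Red p (r • Q) a b) : Red p ((r + m * j) • Q) a b := by
  have h1 := Red_zsmul p _ h j
  have := Red_add_triv p _ _ _ _ _ hr h1 (by simp)
  rw [smul_smul, mul_comm j m, ← add_smul] at this
  simpa using this

theorem Red_addQ (p : ℕ) [Fact p.Prime] {m n : ℤ} (k : ℤ) {a1 b1 a2 b2 : ZMod p} (a b : ZMod p)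
    (h1 : Red p (m • Q) a1 b1) (h2 : Red p (n • Q) a2 b2) (hk : k = m + n)
    (hall : 1 - 1445 * a1 ^ 2 * a2 ^ 2 ≠ 0 ∧
     a * (1 - 1445 * a1 ^ 2 * a2 ^ 2) = a1 * b2 + b1 * a2 ∧
     b * (1 - 1445 * a1 ^ 2 * a2 ^ 2) ^ 2 = (1 + 1445 * a1 ^ 2 * a2 ^ 2) *
      (b1 * b2 - 34 * a1 * a2) + 2 * 1445 * a1 * a2 * (a1 ^ 2 + a2 ^ 2)) :
    Red p (k • Q) a b := by
  rw [hk, add_smul]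
  exact Red_add p _ _ a1 b1 a2 b2 a b h1 h2 hall.1 hall.2.1 hall.2.2

theorem Red_Q (p : ℕ) (a b : ZMod p) (h : (19 : ZMod p) ≠ 0 ∧ 3 = a * 19 ∧ 370 = b * 19 ^ 2) :
    Red p ((1 : ℤ) • Q) a b := by
  rw [one_smul]
  refine ⟨3, 19, 370, ⟨by norm_num, ?_, ?_⟩, ?_, ?_, ?_⟩
  · change (3 / 19 : ℚ) = _; norm_num
  · change (370 / 361 : ℚ) = _; norm_num
  · exact_mod_cast h.1
  · exact_mod_cast h.2.1
  · exact_mod_cast h.2.2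

theorem ne153 (w : ℚ) : 1 - 153 * w ^ 2 ≠ 0 := by
  intro h
  have h1 : IsSquare (17 : ℚ) := ⟨51 * w, by linear_combination 17 * h⟩
  have h2 : IsSquare ((17 : ℕ) : ℚ) := by exact_mod_cast h1
  rw [Rat.isSquare_natCast_iff] at h2
  obtain ⟨k, hk⟩ := h2
  have : k ≤ 4 := by nlinarith
  interval_cases k <;> omega

/-- the condition on `x` reduces mod `p` -/
theorem sq_red (p : ℕ) [Fact p.Prime] (h : JQ) (a b : ZMod p) (hr : Red p h a b) (ε : ℤ) (x r : ℚ)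
    (hx : (x + 2) * (1 - 153 * h.w ^ 2) = ε * (6 * h.y + 68 * h.w))
    (hsq : 17 * (x ^ 3 + 4) = r ^ 2) (hne : 1 - 153 * a ^ 2 ≠ 0) :
    IsSquare (17 * ((ε * (6 * b + 68 * a) - 2 * (1 - 153 * a ^ 2)) ^ 3 + 4 * (1 - 153 * a ^ 2) ^ 3)
      * (1 - 153 * a ^ 2)) := by
  obtain ⟨α, β, Y, ⟨hβ, hw, hy⟩, hb, ha, hY⟩ := hr
  have hq : (β : ℚ) ≠ 0 := by exact_mod_cast hβ
  have hn := ne153 h.w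
  rw [hw, hy] at hx
  rw [hw] at hn
  obtain ⟨Δ, hΔ⟩ : ∃ Δ : ℤ, Δ = β ^ 2 - 153 * α ^ 2 := ⟨_, rfl⟩
  obtain ⟨P, hP⟩ : ∃ P : ℤ, P = ε * (6 * Y + 68 * α * β) - 2 * Δ := ⟨_, rfl⟩
  have hx2 : x * Δ = P := by
    rw [hP, hΔ]; push_cast
    field_simp at hx
    linear_combination hx
  have h1 : IsSquare ((17 * (P ^ 3 + 4 * Δ ^ 3) * Δ : ℤ) : ℚ) := by
    refine ⟨r * Δ ^ 2, ?_⟩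
    push_cast
    rw [← hx2]
    linear_combination (Δ : ℚ) ^ 4 * hsq
  rw [Rat.isSquare_intCast_iff] at h1
  obtain ⟨k, hk⟩ := h1
  refine ⟨(k : ZMod p) / β ^ 4, ?_⟩
  have hk' : ((17 * (P ^ 3 + 4 * Δ ^ 3) * Δ : ℤ) : ZMod p) = ((k * k : ℤ) : ZMod p) := by rw [hk]
  push_cast at hk'
  have hΔz : (Δ : ZMod p) = β ^ 2 * (1 - 153 * a ^ 2) := by
    rw [hΔ]; push_cast; rw [ha]; ring
  have hPz : (P : ZMod p) = β ^ 2 * (ε * (6 * b + 68 * a) - 2 * (1 - 153 * a ^ 2)) := by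
    rw [hP]; push_cast; rw [hΔz, ha, hY]; ring
  rw [hPz, hΔz] at hk'
  field_simp
  linear_combination hk'

theorem not_sq_of_pow (p : ℕ) [Fact p.Prime] (c : ZMod p) (h : IsSquare c) (hp : p = 2 * (p / 2) + 1)
    (h0 : c ≠ 0) : c ^ (p / 2) = 1 := by
  obtain ⟨r, rfl⟩ := h
  have hr : r ≠ 0 := by rintro rfl; simp at h0
  rw [← pow_two, ← pow_mul]
  have := ZMod.pow_card_sub_one_eq_one hr
  have e : p - 1 = 2 * (p / 2) := by omega
  rwa [e] at this

/-- sieving criterion for the second coset -/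
theorem sieve (p : ℕ) [Fact p.Prime] (k m r : ℤ) (hm : Red p (m • Q) 0 1) (a b : ZMod p)
    (hr : Red p (r • Q) a b) (x s : ℚ)
    (hx : (x + 2) * (1 - 153 * (k • Q).w ^ 2) = (-1 : ℤ) * (6 * (k • Q).y + 68 * (k • Q).w))
    (hsq : 17 * (x ^ 3 + 4) = s ^ 2) (hp : p = 2 * (p / 2) + 1)
    (hchk : 1 - 153 * a ^ 2 ≠ 0 ∧ (17 * ((-(6 * b + 68 * a) - 2 * (1 - 153 * a ^ 2)) ^ 3
      + 4 * (1 - 153 * a ^ 2) ^ 3) * (1 - 153 * a ^ 2)) ^ (p / 2) = -1) (hpne : (-1 : ZMod p) ≠ 1 )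
    (hk : m ∣ k - r) : False := by
  obtain ⟨j, hj⟩ := hk
  have e : k = r + m * j := by linarith
  have h1 := Red_period p m r j a b hm hr
  rw [← e] at h1
  have h2 := sq_red p (k • Q) a b h1 (-1) x s hx hsq hchk.1
  push_cast at h2
  rw [neg_one_mul] at h2
  have h4 := hchk.2
  have h3 := not_sq_of_pow p _ h2 hp (by
    intro h0
    rw [h0, zero_pow] at h4
    · exact (neg_ne_zero.mpr one_ne_zero) h4.symm
    · have := (Fact.out : p.Prime).two_le
      omega)
  exact hpne (h4.symm.trans h3)
end JQ

namespace JQ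
instance fact1753 : Fact (Nat.Prime 1753) := ⟨by norm_num⟩
theorem red1753_1 : Red 1753 ((1 : ℤ) • Q) 646 103 := Red_Q 1753 _ _ (by decide +kernel)
theorem red1753_2 : Red 1753 ((2 : ℤ) • Q) 1481 1106 :=
  Red_addQ 1753 2 _ _ red1753_1 red1753_1 (by norm_num) (by decide +kernel)
theorem red1753_4 : Red 1753 ((4 : ℤ) • Q) 1481 647 :=
  Red_addQ 1753 4 _ _ red1753_2 red1753_2 (by norm_num) (by decide +kernel)
theorem red1753_6 : Red 1753 ((6 : ℤ) • Q) 0 1752 :=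
  Red_addQ 1753 6 _ _ red1753_4 red1753_2 (by norm_num) (by decide +kernel)
theorem red1753_8 : Red 1753 ((8 : ℤ) • Q) 272 647 :=
  Red_addQ 1753 8 _ _ red1753_4 red1753_4 (by norm_num) (by decide +kernel)
theorem red1753_10 : Red 1753 ((10 : ℤ) • Q) 272 1106 :=
  Red_addQ 1753 10 _ _ red1753_8 red1753_2 (by norm_num) (by decide +kernel)
theorem red1753_12 : Red 1753 ((12 : ℤ) • Q) 0 1 :=
  Red_addQ 1753 12 _ _ red1753_6 red1753_6 (by norm_num) (by decide +kernel)
instance fact433 : Fact (Nat.Prime 433) := ⟨by norm_num⟩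
theorem red433_1 : Red 433 ((1 : ℤ) • Q) 342 55 := Red_Q 433 _ _ (by decide +kernel)
theorem red433_2 : Red 433 ((2 : ℤ) • Q) 420 0 :=
  Red_addQ 433 2 _ _ red433_1 red433_1 (by norm_num) (by decide +kernel)
theorem red433_4 : Red 433 ((4 : ℤ) • Q) 0 432 :=
  Red_addQ 433 4 _ _ red433_2 red433_2 (by norm_num) (by decide +kernel)
theorem red433_8 : Red 433 ((8 : ℤ) • Q) 0 1 :=
  Red_addQ 433 8 _ _ red433_4 red433_4 (by norm_num) (by decide +kernel)
instance fact47 : Fact (Nat.Prime 47) := ⟨by norm_num⟩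
theorem red47_1 : Red 47 ((1 : ℤ) • Q) 15 38 := Red_Q 47 _ _ (by decide +kernel)
theorem red47_2 : Red 47 ((2 : ℤ) • Q) 33 18 :=
  Red_addQ 47 2 _ _ red47_1 red47_1 (by norm_num) (by decide +kernel)
theorem red47_4 : Red 47 ((4 : ℤ) • Q) 45 7 :=
  Red_addQ 47 4 _ _ red47_2 red47_2 (by norm_num) (by decide +kernel)
theorem red47_6 : Red 47 ((6 : ℤ) • Q) 6 2 :=
  Red_addQ 47 6 _ _ red47_4 red47_2 (by norm_num) (by decide +kernel)
theorem red47_12 : Red 47 ((12 : ℤ) • Q) 41 2 :=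
  Red_addQ 47 12 _ _ red47_6 red47_6 (by norm_num) (by decide +kernel)
theorem red47_18 : Red 47 ((18 : ℤ) • Q) 0 1 :=
  Red_addQ 47 18 _ _ red47_12 red47_6 (by norm_num) (by decide +kernel)
instance fact593 : Fact (Nat.Prime 593) := ⟨by norm_num⟩
theorem red593_1 : Red 593 ((1 : ℤ) • Q) 125 208 := Red_Q 593 _ _ (by decide +kernel)
theorem red593_2 : Red 593 ((2 : ℤ) • Q) 467 458 :=
  Red_addQ 593 2 _ _ red593_1 red593_1 (by norm_num) (by decide +kernel)
theorem red593_4 : Red 593 ((4 : ℤ) • Q) 333 100 :=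
  Red_addQ 593 4 _ _ red593_2 red593_2 (by norm_num) (by decide +kernel)
theorem red593_6 : Red 593 ((6 : ℤ) • Q) 500 313 :=
  Red_addQ 593 6 _ _ red593_4 red593_2 (by norm_num) (by decide +kernel)
theorem red593_12 : Red 593 ((12 : ℤ) • Q) 318 591 :=
  Red_addQ 593 12 _ _ red593_6 red593_6 (by norm_num) (by decide +kernel)
theorem red593_24 : Red 593 ((24 : ℤ) • Q) 318 2 :=
  Red_addQ 593 24 _ _ red593_12 red593_12 (by norm_num) (by decide +kernel)
theorem red593_48 : Red 593 ((48 : ℤ) • Q) 275 2 :=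
  Red_addQ 593 48 _ _ red593_24 red593_24 (by norm_num) (by decide +kernel)
theorem red593_30 : Red 593 ((30 : ℤ) • Q) 500 280 :=
  Red_addQ 593 30 _ _ red593_24 red593_6 (by norm_num) (by decide +kernel)
theorem red593_54 : Red 593 ((54 : ℤ) • Q) 45 0 :=
  Red_addQ 593 54 _ _ red593_48 red593_6 (by norm_num) (by decide +kernel)
theorem red593_72 : Red 593 ((72 : ℤ) • Q) 0 1 :=
  Red_addQ 593 72 _ _ red593_48 red593_24 (by norm_num) (by decide +kernel)
instance fact127 : Fact (Nat.Prime 127) := ⟨by norm_num⟩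
theorem red127_1 : Red 127 ((1 : ℤ) • Q) 67 45 := Red_Q 127 _ _ (by decide +kernel)
theorem red127_2 : Red 127 ((2 : ℤ) • Q) 60 45 :=
  Red_addQ 127 2 _ _ red127_1 red127_1 (by norm_num) (by decide +kernel)
theorem red127_3 : Red 127 ((3 : ℤ) • Q) 0 1 :=
  Red_addQ 127 3 _ _ red127_2 red127_1 (by norm_num) (by decide +kernel)

theorem coset_one (k : ℤ) (x s : ℚ)
    (hx : (x + 2) * (1 - 153 * ((2 * k) • Q).w ^ 2)
      = (-1 : ℤ) * (6 * ((2 * k) • Q).y + 68 * ((2 * k) • Q).w))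
    (hsq : 17 * (x ^ 3 + 4) = s ^ 2) : False := by
  have a0 : ¬ (12 : ℤ) ∣ 2 * k - 0 := fun h => sieve 1753 (2 * k) 12 0 red1753_12 0 1
    (by rw [zero_smul]; exact Red_zero 1753) x s hx hsq (by norm_num) (by decide +kernel) (by decide +kernel) h
  have a1 : ¬ (12 : ℤ) ∣ 2 * k - 2 := fun h => sieve 1753 (2 * k) 12 2 red1753_12 _ _
    red1753_2 x s hx hsq (by norm_num) (by decide +kernel) (by decide +kernel) h
  have a2 : ¬ (12 : ℤ) ∣ 2 * k - 4 := fun h => sieve 1753 (2 * k) 12 4 red1753_12 _ _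
    red1753_4 x s hx hsq (by norm_num) (by decide +kernel) (by decide +kernel) h
  have a4 : ¬ (12 : ℤ) ∣ 2 * k - 8 := fun h => sieve 1753 (2 * k) 12 8 red1753_12 _ _
    red1753_8 x s hx hsq (by norm_num) (by decide +kernel) (by decide +kernel) h
  have a5 : ¬ (12 : ℤ) ∣ 2 * k - 10 := fun h => sieve 1753 (2 * k) 12 10 red1753_12 _ _
    red1753_10 x s hx hsq (by norm_num) (by decide +kernel) (by decide +kernel) h
  have b1 : ¬ (8 : ℤ) ∣ 2 * k - 2 := fun h => sieve 433 (2 * k) 8 2 red433_8 _ _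
    red433_2 x s hx hsq (by norm_num) (by decide +kernel) (by decide +kernel) h
  have c3 : ¬ (18 : ℤ) ∣ 2 * k - 6 := fun h => sieve 47 (2 * k) 18 6 red47_18 _ _
    red47_6 x s hx hsq (by norm_num) (by decide +kernel) (by decide +kernel) h
  have d1 : ¬ (72 : ℤ) ∣ 2 * k - 30 := fun h => sieve 593 (2 * k) 72 30 red593_72 _ _
    red593_30 x s hx hsq (by norm_num) (by decide +kernel) (by decide +kernel) h
  have d2 : ¬ (72 : ℤ) ∣ 2 * k - 54 := fun h => sieve 593 (2 * k) 72 54 red593_72 _ _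
    red593_54 x s hx hsq (by norm_num) (by decide +kernel) (by decide +kernel) h
  have e1 : k % 6 = 3 := by
    clear b1 c3 d1 d2
    have : k % 6 = 0 ∨ k % 6 = 1 ∨ k % 6 = 2 ∨ k % 6 = 3 ∨ k % 6 = 4 ∨ k % 6 = 5 := by omega
    rcases this with h | h | h | h | h | h <;> omega
  clear a0 a1 a2 a4 a5
  have e2 : k % 12 = 3 := by
    clear c3 d1 d2
    have : k % 12 = 3 ∨ k % 12 = 9 := by omega
    rcases this with h | h <;> omega
  have e3 : k % 36 = 3 ∨ k % 36 = 15 ∨ k % 36 = 27 := by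
    clear b1 c3 d1 d2
    omega
  clear b1 e1 e2
  rcases e3 with h | h | h <;> omega
end JQ

open NumberTheorySymbols
theorem jac_recip (p : ℕ) (hp : p.Prime) (h2 : p ≠ 2) (h0 : ((-2159 : ℤ) : ZMod p) ≠ 0)
    (hsq : IsSquare ((-2159 : ℤ) : ZMod p)) : J(p | 2159) = 1 := by
  have : Fact p.Prime := ⟨hp⟩
  have h1 : legendreSym p (-2159) = 1 := (legendreSym.eq_one_iff p h0).mpr hsq
  rw [jacobiSym.legendreSym.to_jacobiSym] at h1
  have hodd : Odd p := hp.odd_of_ne_two h2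
  have h3 : J(-2159 | p) = ZMod.χ₄ p * J((2159 : ℕ) | p) := by
    have := jacobiSym.neg 2159 hodd
    rw [this]; rfl
  rcases Nat.odd_mod_four_iff.mp (Nat.odd_iff.mp hodd) with h4 | h4
  · rw [h3, ZMod.χ₄_nat_one_mod_four h4, one_mul] at h1
    rw [jacobiSym.quadratic_reciprocity_one_mod_four h4 (by decide)]
    exact h1
  · rw [h3, ZMod.χ₄_nat_three_mod_four h4] at h1
    rw [jacobiSym.quadratic_reciprocity_three_mod_four h4 (by norm_num)]
    linarith

theorem jac_two : J(2 | 2159) = 1 := by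
  norm_num

theorem jac_prod (n : ℕ) (h0 : n ≠ 0) (h : ∀ p : ℕ, p.Prime → p ∣ n → J(p | 2159) = 1) :
    J(n | 2159) = 1 := by
  induction n using induction_on_primes with
  | zero => exact absurd rfl h0
  | one => simp
  | prime_mul p a hp ih =>
    push_cast
    rw [jacobiSym.mul_left, h p hp (Dvd.intro _ rfl), one_mul]
    exact ih (right_ne_zero_of_mul h0) (fun q hq hd => h q hq (hd.mul_left _))

namespace JQ
instance fact17 : Fact (Nat.Prime 17) := ⟨by norm_num⟩
theorem seventeen_zero : (17 : ZMod 17) = 0 := by decide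
theorem fortyfive_ne : (45 : ZMod 127) ≠ 0 := by decide +kernel

theorem red_coprime (p : ℕ) [Fact p.Prime] (g : JQ) (a b : ZMod p) (h : Red p g a b) (α β Y : ℤ)
    (hr : Rep g α β Y) (hc : IsCoprime α β) :
    (β : ZMod p) ≠ 0 ∧ (Y : ZMod p) = b * β ^ 2 := by
  obtain ⟨α', β', Y', ⟨h0', hw', hy'⟩, hb, ha, hY⟩ := h
  obtain ⟨h0, hw, hy⟩ := hr
  have q : (β : ℚ) ≠ 0 := by exact_mod_cast h0
  have q' : (β' : ℚ) ≠ 0 := by exact_mod_cast h0'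
  have e1 : α * β' = α' * β := by
    rw [hw', div_eq_div_iff q' q] at hw
    exact_mod_cast hw.symm
  have e2 : Y * β' ^ 2 = Y' * β ^ 2 := by
    rw [hy', div_eq_div_iff (pow_ne_zero _ q') (pow_ne_zero _ q)] at hy
    exact_mod_cast hy.symm
  have e1p : (α : ZMod p) * β' = α' * β := by exact_mod_cast congrArg (Int.cast : ℤ → ZMod p) e1
  have e2p : (Y : ZMod p) * β' ^ 2 = Y' * β ^ 2 := by
    exact_mod_cast congrArg (Int.cast : ℤ → ZMod p) e2
  constructor
  · intro hβ
    rw [hβ, mul_zero] at e1p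
    have hα : (α : ZMod p) = 0 := (mul_eq_zero.mp e1p).resolve_right hb
    obtain ⟨u, v, huv⟩ := hc
    have := congrArg (Int.cast : ℤ → ZMod p) huv
    push_cast at this
    rw [hα, hβ] at this
    simp at this
  · rw [hY] at e2p
    have : (β' : ZMod p) ^ 2 ≠ 0 := pow_ne_zero _ hb
    apply mul_right_cancel₀ this
    linear_combination e2p

theorem not_dvd_den (p : ℕ) (hp : p.Prime) (α β Y : ℤ) (hc : IsCoprime α β)
    (he : Y ^ 2 = β ^ 4 - 34 * α ^ 2 * β ^ 2 + 1445 * α ^ 4) (hY : (p : ℤ) ∣ Y) : ¬ (p : ℤ) ∣ β := by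
  intro hβ
  have hpZ : Prime (p : ℤ) := Nat.prime_iff_prime_int.mp hp
  have hα : ¬ (p : ℤ) ∣ α := fun h => hpZ.not_isUnit (hc.isUnit_of_dvd' h hβ)
  have h17 := not17 α β Y hc he
  obtain ⟨b, rfl⟩ := hβ
  obtain ⟨y, rfl⟩ := hY
  have h1 : (p : ℤ) * p ∣ 5 * 17 ^ 2 * α ^ 4 :=
    ⟨y ^ 2 - p ^ 2 * b ^ 4 + 34 * α ^ 2 * b ^ 2, by linear_combination -he⟩
  have hcop : IsCoprime ((p : ℤ) * p) (α ^ 4) := by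
    have : IsCoprime (p : ℤ) α := (hpZ.irreducible.coprime_iff_not_dvd).mpr hα
    exact (this.pow_right).mul_left this.pow_right
  have h5 := hcop.dvd_of_dvd_mul_right h1
  have h17' : ¬ (p : ℤ) ∣ 17 := by
    intro hd
    exact h17 ((hpZ.associated_of_dvd p17 hd).symm.dvd.trans (Dvd.intro _ rfl))
  have h6 : IsCoprime ((p : ℤ) * p) (17 ^ 2) := by
    have : IsCoprime (p : ℤ) 17 := (hpZ.irreducible.coprime_iff_not_dvd).mpr h17'
    exact (this.pow_right).mul_left this.pow_right
  have h7 := h6.dvd_of_dvd_mul_right h5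
  exact hpZ.not_isUnit (p5.irreducible.squarefree _ h7)

theorem red_dbl (p : ℕ) [Fact p.Prime] (hp2 : (2 : ZMod p) ≠ 0) (g : JQ) (a : ZMod p) (h : Red p g a 0) :
    Red p (g + g) 0 (-1) := by
  have heq : 1 - 34 * a ^ 2 + 1445 * a ^ 4 = 0 := by
    obtain ⟨α, β, Y, hr, hb, ha, hY⟩ := h
    have e := hr.eqn.1
    have := congrArg (Int.cast : ℤ → ZMod p) e
    push_cast at this
    rw [ha, hY] at this
    have h3 : (β : ZMod p) ^ 4 * (1 - 34 * a ^ 2 + 1445 * a ^ 4) = 0 := by linear_combination -this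
    exact (mul_eq_zero.mp h3).resolve_left (pow_ne_zero _ hb)
  apply Red_add p g g a 0 a 0 0 (-1) h h
  · intro h0
    have h1 : 2 * (1 - 17 * a ^ 2) = 0 := by linear_combination h0 + heq
    have h2 := (mul_eq_zero.mp h1).resolve_left hp2
    have h4 : (2 : ZMod p) * 2 = 0 := by
      have : (17 * a ^ 2) = 1 := by linear_combination -h2
      have h5 : (1 : ZMod p) - 2 * (17 * a ^ 2) + 5 * (17 * a ^ 2) ^ 2 = 0 := by
        linear_combination heq
      rw [this] at h5
      linear_combination h5
    exact hp2 (by simpa using h4)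
  · ring
  · linear_combination (-(1 + 1445 * a ^ 4)) * heq

theorem coset_zero (k : ℤ) (hk0 : k ≠ 0) (x s : ℚ)
    (hx : (x + 2) * (1 - 153 * ((2 * k) • Q).w ^ 2)
      = (1 : ℤ) * (6 * ((2 * k) • Q).y + 68 * ((2 * k) • Q).w))
    (hsq : 17 * (x ^ 3 + 4) = s ^ 2) : False := by
  have hfin : FiniteMultiplicity (3 : ℤ) k := Int.finiteMultiplicity_iff.mpr ⟨by decide, hk0⟩
  obtain ⟨k', hk, h3⟩ := hfin.exists_eq_pow_mul_and_not_dvd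
  obtain ⟨j, hj⟩ : ∃ j : ℕ, k = 3 ^ j * k' := ⟨_, hk⟩
  clear hk
  obtain ⟨S0, hS0⟩ : ∃ S0 : JQ, S0 = k' • Q := ⟨_, rfl⟩
  have hG : (2 * k) • Q = (3 ^ j : ℕ) • (S0 + S0) := by
    rw [hS0, ← add_smul, ← natCast_zsmul, smul_smul, hj]
    congr 1; push_cast; ring
  have h127 : ∃ a : ZMod 127, Red 127 S0 a 45 := by
    have : k' % 3 = 1 ∨ k' % 3 = 2 := by omega
    rcases this with h | h
    · refine ⟨67, ?_⟩
      rw [hS0, show k' = 1 + 3 * (k' / 3) by omega]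
      exact Red_period 127 3 1 _ _ _ red127_3 red127_1
    · refine ⟨60, ?_⟩
      rw [hS0, show k' = 2 + 3 * (k' / 3) by omega]
      exact Red_period 127 3 2 _ _ _ red127_3 red127_2
  obtain ⟨a127, h127⟩ := h127
  obtain ⟨α, β, Y, hrep, hcop⟩ := exists_rep S0
  obtain ⟨heq, hYpos⟩ := hrep.eqn
  obtain ⟨hb127, hY127⟩ := red_coprime 127 S0 _ _ h127 α β Y hrep hcop
  have h17 := not17 α β Y hcop heq
  have hleg127 : J(Y | 127) = -1 := by
    rw [← jacobiSym.legendreSym.to_jacobiSym, legendreSym.eq_neg_one_iff, hY127]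
    rintro ⟨r, hr⟩
    have h45 : IsSquare (45 : ZMod 127) := ⟨r / β, by field_simp; linear_combination hr⟩
    have := not_sq_of_pow 127 45 h45 (by norm_num) (by decide +kernel)
    revert this
    decide +kernel
  have h17z : (β : ZMod 17) ≠ 0 := by
    intro h
    exact h17 (by exact_mod_cast (zmod_dvd 17 β).mp h)
  have hY17 : (Y : ZMod 17) ^ 2 = β ^ 4 := by
    have := congrArg (Int.cast : ℤ → ZMod 17) heq
    push_cast at this
    rw [this]
    have e1 : (34 : ZMod 17) = 0 := by decide
    have e2 : (1445 : ZMod 17) = 0 := by decide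
    rw [e1, e2]; ring
  have hY17' : (Y : ZMod 17) ≠ 0 := by
    intro h
    rw [h] at hY17
    exact pow_ne_zero 4 h17z (by rw [← hY17]; simp)
  have hleg17 : J(Y | 17) = 1 := by
    rw [← jacobiSym.legendreSym.to_jacobiSym, legendreSym.eq_one_iff 17 hY17']
    have : ((Y : ZMod 17) - β ^ 2) * (Y + β ^ 2) = 0 := by linear_combination hY17
    rcases mul_eq_zero.mp this with h | h
    · exact ⟨β, by linear_combination h⟩
    · refine ⟨4 * β, ?_⟩
      linear_combination h - (β : ZMod 17) ^ 2 * seventeen_zero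
  have hJ : J(Y | 2159) = -1 := by
    rw [show (2159 : ℕ) = 17 * 127 by norm_num, jacobiSym.mul_right, hleg17, hleg127]; norm_num
  have hYn : ((Y.toNat : ℕ) : ℤ) = Y := Int.toNat_of_nonneg hYpos.le
  have hJ1 : J((Y.toNat : ℕ) | 2159) = 1 := by
    apply jac_prod _ (by omega)
    intro p hp hpd
    have hpY : (p : ℤ) ∣ Y := by rw [← hYn]; exact_mod_cast hpd
    by_cases hp2 : p = 2
    · rw [hp2]; exact jac_two
    have : Fact p.Prime := ⟨hp⟩
    have hnb := not_dvd_den p hp α β Y hcop heq hpY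
    have hbz : (β : ZMod p) ≠ 0 := fun h => hnb ((zmod_dvd p β).mp h)
    have hYz : (Y : ZMod p) = 0 := (zmod_dvd p Y).mpr hpY
    have h2z : (2 : ZMod p) ≠ 0 := by
      intro h
      have h' : ((2 : ℕ) : ZMod p) = 0 := by exact_mod_cast h
      rw [ZMod.natCast_eq_zero_iff] at h'
      exact hp2 ((Nat.prime_dvd_prime_iff_eq hp Nat.prime_two).mp h')
    have hR : Red p S0 ((α : ZMod p) / β) 0 :=
      ⟨α, β, Y, hrep, hbz, by field_simp, by rw [hYz]; ring⟩
    have hR2 := red_dbl p h2z S0 _ hR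
    have hR3 := Red_nsmul p _ (-1) (by ring) hR2 (3 ^ j)
    have hodd : Odd (3 ^ j) := Odd.pow (by decide)
    rw [hodd.neg_one_pow, ← hG] at hR3
    have hS := sq_red p _ _ _ hR3 1 x s hx hsq (by simp)
    have hS' : IsSquare ((-2159 : ℤ) : ZMod p) := by
      obtain ⟨r, hr⟩ := hS
      refine ⟨r / 2, ?_⟩
      field_simp
      push_cast at hr ⊢
      linear_combination hr
    apply jac_recip p hp hp2 _ hS'
    intro h0
    rw [zmod_dvd] at h0
    have h0' : p ∣ 2159 := by
      have := Int.natAbs_dvd_natAbs.mpr h0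
      simpa using this
    rw [show 2159 = 17 * 127 by norm_num, hp.dvd_mul] at h0'
    rcases h0' with h | h
    · have := (Nat.prime_dvd_prime_iff_eq hp (by norm_num)).mp h
      subst this
      exact hY17' hYz
    · have := (Nat.prime_dvd_prime_iff_eq hp (by norm_num)).mp h
      subst this
      rw [hYz] at hY127
      have := mul_ne_zero fortyfive_ne (pow_ne_zero 2 hb127)
      exact this hY127.symm
  rw [hYn] at hJ1
  rw [hJ1] at hJ
  norm_num at hJ
end JQ

namespace JQ

theorem tors_den (z : ℚ) : 20 - 9 * z ^ 2 ≠ 0 := by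
  intro h
  apply five_not_sq (3 * z / 10)
  linear_combination -h / 20

theorem tors_eq (z v w y : ℚ) (hv : 17 * v ^ 2 = z ^ 4 - 8 * z ^ 2 + 80)
    (hw : w * (20 - 9 * z ^ 2) = 4 * z - 3 * v) (hy : 6 * y = z * (1 - 153 * w ^ 2) - 68 * w) :
    y ^ 2 = 1 - 34 * w ^ 2 + 1445 * w ^ 4 := by
  have hD := tors_den z
  have h1 : (9 * z ^ 2 - 20) * w ^ 2 * 17 + 8 * 17 * z * w = z ^ 2 - 36 := by
    apply mul_left_cancel₀ hD
    grind
  grind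

theorem lift (w y : ℚ) (h : y ^ 2 = 1 - 34 * w ^ 2 + 1445 * w ^ 4) :
    ∃ ε : ℤ, (ε = 1 ∨ ε = -1) ∧ ∃ g : JQ, g.w = ε * w ∧ g.y = ε * y := by
  rcases lt_trichotomy y 0 with hy | hy | hy
  · exact ⟨-1, Or.inr rfl, ⟨-w, -y, by rw [neg_sq, h]; ring, by linarith⟩, by simp, by simp⟩
  · exfalso
    rw [hy] at h
    nlinarith [sq_nonneg (w ^ 2 - 17 / 1445)]
  · exact ⟨1, Or.inl rfl, ⟨w, y, h, hy⟩, by simp, by simp⟩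

theorem tors_sum (z v w1 y1 w2 y2 : ℚ) (hv : 17 * v ^ 2 = z ^ 4 - 8 * z ^ 2 + 80)
    (hw : w1 * (20 - 9 * z ^ 2) = 4 * z - 3 * v) (hy : 6 * y1 = z * (1 - 153 * w1 ^ 2) - 68 * w1)
    (hw2 : w2 * (20 - 9 * z ^ 2) = 4 * z + 3 * v) (hy2 : 6 * y2 = z * (1 - 153 * w2 ^ 2) - 68 * w2) :
    (w1 * y2 + y1 * w2) * 19 = -3 * (1 - 1445 * w1 ^ 2 * w2 ^ 2) ∧
    ((1+1445*w1^2*w2^2)*(y1*y2-34*w1*w2)+2*1445*w1*w2*(w1^2+w2^2)) * 361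
      = -370 * (1 - 1445 * w1 ^ 2 * w2 ^ 2) ^ 2 := by
  have hD := tors_den z
  have hp : 17 * (w1 * w2) * (20 - 9 * z ^ 2) = z ^ 2 - 36 := by
    apply mul_left_cancel₀ hD
    linear_combination 17 * (w2 * (20 - 9 * z ^ 2)) * hw + 17 * (4 * z - 3 * v) * hw2 - 9 * hv
  have hs : (w1 + w2) * (20 - 9 * z ^ 2) = 8 * z := by linear_combination hw + hw2
  have e1 : 6 * (w1 * y2 + y1 * w2) = (w1 + w2) * z * (1 - 153 * (w1 * w2)) - 136 * (w1 * w2) := by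
    linear_combination w1 * hy2 + w2 * hy
  have e2 : 36 * (y1 * y2) = z ^ 2 * (1 - 153 * ((w1 + w2) ^ 2 - 2 * (w1 * w2)) + 153 ^ 2 * (w1 * w2) ^ 2)
      - 68 * z * (w1 + w2) * (1 - 153 * (w1 * w2)) + 68 ^ 2 * (w1 * w2) := by
    linear_combination (6 * y2) * hy + (z * (1 - 153 * w1 ^ 2) - 68 * w1) * hy2
  obtain ⟨d, hd⟩ : ∃ d, d * (20 - 9 * z ^ 2) = 1 := ⟨(20 - 9 * z ^ 2)⁻¹, inv_mul_cancel₀ hD⟩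
  obtain ⟨P, hPd⟩ : ∃ P, P = w1 * w2 := ⟨_, rfl⟩
  obtain ⟨S, hSd⟩ : ∃ S, S = w1 + w2 := ⟨_, rfl⟩
  rw [← hPd] at hp
  rw [← hSd] at hs
  have hP : P = -(304 * d + 1) / 153 := by
    linear_combination (d / 17) * hp - (P + 1 / 153) * hd
  have hS : S = 8 * z * d := by linear_combination d * hs - S * hd
  have hT : z * S = 8 * (20 * d - 1) / 9 := by rw [hS]; linear_combination (-8 / 9) * hd
  have hSS : S ^ 2 = 64 * d * (20 * d - 1) / 9 := by
    linear_combination (S + 8 * z * d) * hS - (64 / 9 * d) * hd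
  have hZ : z ^ 2 * (1 + 153 * P) ^ 2 = 304 ^ 2 * d * (20 * d - 1) / 9 := by
    rw [hP]; linear_combination (-304 ^ 2 * d / 9) * hd
  rw [← hPd, ← hSd] at e1 e2
  have e1' : 6 * (w1 * y2 + y1 * w2) = 8 * (20 * d - 1) / 9 * (1 - 153 * P) - 136 * P := by
    linear_combination e1 + (1 - 153 * P) * hT
  have e2' : 36 * (y1 * y2) = 304 ^ 2 * d * (20 * d - 1) / 9 - 153 * (8 * (20 * d - 1) / 9) ^ 2
      - 68 * (8 * (20 * d - 1) / 9) * (1 - 153 * P) + 68 ^ 2 * P := by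
    linear_combination e2 + hZ - 68 * (1 - 153 * P) * hT
      - 153 * (z * S + 8 * (20 * d - 1) / 9) * hT
  constructor
  · have : 6 * (w1 * y2 + y1 * w2) * 19 = -18 * (1 - 1445 * P ^ 2) := by
      rw [e1', hP]; ring
    rw [hPd] at this
    linear_combination this / 6
  · have : ((1+1445*P^2)*(36 * (y1*y2)-34*36*P)+2*1445*36*P*(S^2-2*P)) * 361
      = -370 * 36 * (1 - 1445 * P ^ 2) ^ 2 := by
      rw [e2', hSS, hP]; ring
    rw [hPd, hSd] at this
    linear_combination this / 36

theorem finish (x s : ℚ) (g : JQ) (k ε : ℤ) (hε : ε = 1 ∨ ε = -1) (hg : g = (2 * k) • Q)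
    (hx : (x + 2) * (1 - 153 * g.w ^ 2) = ε * (6 * g.y + 68 * g.w))
    (hsq : 17 * (x ^ 3 + 4) = s ^ 2) : x = 4 := by
  rcases hε with rfl | rfl
  · by_cases hk : k = 0
    · rw [hk, mul_zero, zero_smul] at hg
      rw [hg, zero_w, zero_y] at hx
      norm_num at hx
      linarith
    · rw [hg] at hx
      exact (coset_zero k hk x s hx hsq).elim
  · rw [hg] at hx
    exact (coset_one k x s hx hsq).elim

theorem torsor (x v s : ℚ) (hv : 17 * v ^ 2 = x ^ 4 + 8 * x ^ 3 + 16 * x ^ 2 + 64)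
    (hsq : 17 * (x ^ 3 + 4) = s ^ 2) : x = 4 := by
  obtain ⟨z, hz⟩ : ∃ z, z = x + 2 := ⟨_, rfl⟩
  have hD := tors_den z
  have hv' : 17 * v ^ 2 = z ^ 4 - 8 * z ^ 2 + 80 := by rw [hz, hv]; ring
  obtain ⟨w1, hw1⟩ : ∃ w, w * (20 - 9 * z ^ 2) = 4 * z - 3 * v := ⟨_, div_mul_cancel₀ _ hD⟩
  obtain ⟨w2, hw2⟩ : ∃ w, w * (20 - 9 * z ^ 2) = 4 * z + 3 * v := ⟨_, div_mul_cancel₀ _ hD⟩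
  obtain ⟨y1, hy1⟩ : ∃ y, 6 * y = z * (1 - 153 * w1 ^ 2) - 68 * w1 :=
    ⟨_, mul_div_cancel₀ _ (by norm_num)⟩
  obtain ⟨y2, hy2⟩ : ∃ y, 6 * y = z * (1 - 153 * w2 ^ 2) - 68 * w2 :=
    ⟨_, mul_div_cancel₀ _ (by norm_num)⟩
  obtain ⟨ε1, hε1, g1, hgw1, hgy1⟩ := lift w1 y1 (tors_eq z v w1 y1 hv' hw1 hy1)
  obtain ⟨ε2, hε2, g2, hgw2, hgy2⟩ := lift w2 y2 (tors_eq z (-v) w2 y2 (by rw [neg_sq, hv'])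
    (by linear_combination hw2) hy2)
  obtain ⟨hsw, hsy⟩ := tors_sum z v w1 y1 w2 y2 hv' hw1 hy1 hw2 hy2
  have hne := den_ne w1 w2
  have hx1 : (x + 2) * (1 - 153 * g1.w ^ 2) = ε1 * (6 * g1.y + 68 * g1.w) := by
    rw [hgw1, hgy1, ← hz]
    rcases hε1 with rfl | rfl <;> push_cast <;> linear_combination -hy1
  have hx2 : (x + 2) * (1 - 153 * g2.w ^ 2) = ε2 * (6 * g2.y + 68 * g2.w) := by
    rw [hgw2, hgy2, ← hz]
    rcases hε2 with rfl | rfl <;> push_cast <;> linear_combination -hy2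
  have hsum : g1 + g2 = Q := by
    by_cases hεε : ε1 = ε2
    · exfalso
      have hp := (g1 + g2).pos
      rw [add_y, hgw1, hgw2, hgy1, hgy2, hεε] at hp
      have hq : (ε2 : ℚ) ^ 2 = 1 := by rcases hε2 with rfl | rfl <;> norm_num
      have h4 : (ε2 : ℚ) ^ 4 = 1 := by rw [show (ε2 : ℚ) ^ 4 = (ε2 ^ 2) ^ 2 by ring, hq]; norm_num
      have : ((1 + 1445 * (↑ε2 * w1) ^ 2 * (↑ε2 * w2) ^ 2) * (↑ε2 * y1 * (↑ε2 * y2) - 34 * (↑ε2 * w1) * (↑ε2 * w2))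
         + 2 * 1445 * (↑ε2 * w1) * (↑ε2 * w2) * ((↑ε2 * w1) ^ 2 + (↑ε2 * w2) ^ 2))
         / (1 - 1445 * (↑ε2 * w1) ^ 2 * (↑ε2 * w2) ^ 2) ^ 2 = -370 / 361 := by
        rcases hε2 with rfl | rfl <;> push_cast <;> field_simp <;> linear_combination hsy
      linarith
    · apply ext'
      rw [add_w, hgw1, hgw2, hgy1, hgy2]
      have hQ : Q.w = 3 / 19 := rfl
      rw [hQ, div_eq_div_iff _ (by norm_num)]
      · rcases hε1 with rfl | rfl <;> rcases hε2 with rfl | rfl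
        · exact absurd rfl hεε
        · push_cast; linear_combination -hsw
        · push_cast; linear_combination -hsw
        · exact absurd rfl hεε
      · exact den_ne _ _
  obtain ⟨m, hm⟩ := mw g1
  rcases Int.even_or_odd' m with ⟨k, hk | hk⟩
  · exact finish x s g1 k ε1 hε1 (by rw [hm, hk]) hx1 hsq
  · refine finish x s g2 (-k) ε2 hε2 ?_ hx2 hsq
    have : g2 = Q - g1 := by rw [← hsum]; abel
    rw [this, hm, hk]
    module
end JQ


theorem step_fourth (P R n : ℤ) (h : P * R = n ^ 4) (hs : 0 < P + R)
    (hc : ∀ ℓ : ℤ, Prime ℓ → ℓ ∣ P → ℓ ∣ R → ℓ ∣ n → False) :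
    ∃ i j : ℤ, P = i ^ 4 ∧ R = j ^ 4 ∧ (n = i * j ∨ n = -(i * j)) ∧ IsCoprime i j := by
  have hcop : IsCoprime P R := coprime_of_prime_sq P R 1 n squarefree_one (by rw [h]; ring) hs.ne' hc
  obtain ⟨h1, h2⟩ := nonneg_pair P R hs (by rw [h]; positivity)
  obtain ⟨i, j, rfl, rfl, h3⟩ := fourth_factors P R n hcop h1 h2 h
  exact ⟨i, j, rfl, rfl, h3, (IsCoprime.pow_iff (by norm_num) (by norm_num)).mp hcop⟩

theorem step_five (P R n : ℤ) (h : P * R = 5 * n ^ 4) (hs : 0 < P + R)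
    (hc : ∀ ℓ : ℤ, Prime ℓ → ℓ ∣ P → ℓ ∣ R → ℓ ∣ n → False) :
    ∃ i j : ℤ, P + R = i ^ 4 + 5 * j ^ 4 ∧ (n = i * j ∨ n = -(i * j)) := by
  have hcop : IsCoprime P R := coprime_of_prime_sq P R 5 n p5.irreducible.squarefree h hs.ne' hc
  obtain ⟨h1, h2⟩ := nonneg_pair P R hs (by rw [h]; positivity)
  obtain ⟨i, j, h3 | h3, h4⟩ := five_factors P R n hcop h1 h2 h
  · exact ⟨i, j, by rw [h3.1, h3.2], h4⟩
  · exact ⟨i, j, by rw [h3.1, h3.2]; ring, h4⟩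

theorem no_common (X Y ℓ : ℤ) (hc : IsCoprime X Y) (hℓ : Prime ℓ) (h1 : ℓ ∣ X) (h2 : ℓ ∣ Y) : False :=
  hℓ.not_isUnit (hc.isUnit_of_dvd' h1 h2)

theorem not_two_of_odd (ℓ A : ℤ) (hℓ : Prime ℓ) (h : ℓ ∣ A) (hA : Odd A) : ¬ ℓ ∣ 2 :=
  not_two_of_odd_prod ℓ A hℓ h (by rwa [← even_iff_two_dvd, Int.not_even_iff_odd])

theorem sq_eq_of_pm (a b : ℤ) (h : a = b ∨ a = -b) : a ^ 2 = b ^ 2 := by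
  rcases h with rfl | rfl <;> ring

theorem odd_of_pm (a m n : ℤ) (h : a = m * n ∨ a = -(m * n)) (ha : Odd a) : Odd m ∧ Odd n := by
  rcases h with rfl | rfl
  · exact Int.odd_mul.mp ha
  · rw [odd_neg] at ha
    exact Int.odd_mul.mp ha

theorem dvd_of_pm (a m n : ℤ) (h : a = m * n ∨ a = -(m * n)) : n ∣ a := by
  rcases h with rfl | rfl
  · exact Dvd.intro_left _ rfl
  · exact (Dvd.intro_left _ rfl : n ∣ m * n).neg_right

theorem odd_step (X Y Z : ℤ) (hX0 : 0 < X) (_hX : Odd X) (hY : Odd Y) (hc : IsCoprime X Y)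
    (h : X ^ 4 + X ^ 2 * Y ^ 2 - Y ^ 4 = Z ^ 2) :
    ∃ i j m n : ℤ, IsCoprime j i ∧ Odd i ∧ Odd j ∧ m ^ 2 = j ^ 4 + j ^ 2 * i ^ 2 - i ^ 4 ∧
      n ^ 2 = i ^ 2 * j ^ 2 ∧ Y ^ 2 = m ^ 2 * n ^ 2 ∧ 4 * X ^ 2 = (m ^ 2 - n ^ 2) ^ 2 + 4 * n ^ 4 := by
  have hX2 : 0 < X ^ 2 := by positivity
  obtain ⟨m, n, hmn, hYmn⟩ := step_five (2 * X ^ 2 + Y ^ 2 - 2 * Z) (2 * X ^ 2 + Y ^ 2 + 2 * Z) Y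
    (by linear_combination 4 * h) (by nlinarith [sq_nonneg Y]) (by
      intro ℓ hℓ h1 h2 h3
      have h2' := not_two_of_odd ℓ Y hℓ h3 hY
      have h4 : ℓ ∣ 2 * (2 * (X * X)) := by
        have : 2 * (2 * (X * X)) = (2 * X ^ 2 + Y ^ 2 - 2 * Z) + (2 * X ^ 2 + Y ^ 2 + 2 * Z) - Y * (2 * Y) := by ring
        rw [this]
        exact dvd_sub (dvd_add h1 h2) (h3.mul_right _)
      have h5 := dvd_of_two_mul _ _ hℓ h2' (dvd_of_two_mul _ _ hℓ h2' h4)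
      exact no_common X Y ℓ hc hℓ ((hℓ.dvd_or_dvd h5).elim id id) h3)
  have hY2 := sq_eq_of_pm _ _ hYmn
  have hXmn : 4 * X ^ 2 = (m ^ 2 - n ^ 2) ^ 2 + 4 * n ^ 4 := by
    linear_combination hmn - 2 * hY2
  obtain ⟨hm, hn⟩ := odd_of_pm _ _ _ hYmn hY
  obtain ⟨D, hD⟩ : ∃ D, m ^ 2 - n ^ 2 = 2 * (2 * D) := by
    obtain ⟨a, rfl⟩ := hm
    obtain ⟨b, rfl⟩ := hn
    exact ⟨a ^ 2 + a - b ^ 2 - b, by ring⟩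
  have hprod : (X - 2 * D) * (X + 2 * D) = n ^ 4 := by
    rw [hD] at hXmn
    linarith
  have hnY := dvd_of_pm _ _ _ hYmn
  obtain ⟨i, j, hi, hj, hnij, hcij⟩ := step_fourth (X - 2 * D) (X + 2 * D) n hprod (by linarith) (by
    intro ℓ hℓ h1 h2 h3
    have h2' := not_two_of_odd ℓ n hℓ h3 hn
    have h4 : ℓ ∣ 2 * X := by
      have : 2 * X = (X - 2 * D) + (X + 2 * D) := by ring
      rw [this]
      exact dvd_add h1 h2
    exact no_common X Y ℓ hc hℓ (dvd_of_two_mul _ _ hℓ h2' h4) (h3.trans hnY))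
  have hn2 := sq_eq_of_pm _ _ hnij
  obtain ⟨hio, hjo⟩ := odd_of_pm _ _ _ hnij hn
  refine ⟨i, j, m, n, hcij.symm, hio, hjo, ?_, by rw [hn2]; ring, by rw [hY2]; ring, hXmn⟩
  linear_combination hD - hi + hj + hn2

theorem odd_mod8 (a : ℤ) (h : Odd a) : a ^ 2 % 8 = 1 := by
  obtain ⟨b, rfl⟩ := h
  obtain ⟨c, hc⟩ := Int.even_mul_succ_self b
  have : (2 * b + 1) ^ 2 = 8 * c + 1 := by linear_combination 4 * hc
  omega

theorem even_sq_mod4 (a : ℤ) (h : Even a) : a ^ 2 % 4 = 0 := by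
  obtain ⟨b, rfl⟩ := h
  have : (b + b) ^ 2 = 4 * b ^ 2 := by ring
  omega

theorem even_step (X Y Z : ℤ) (hX0 : 0 < X) (hX : Odd X) (hc : IsCoprime X (2 * Y))
    (h : X ^ 4 + X ^ 2 * (2 * Y) ^ 2 - (2 * Y) ^ 4 = Z ^ 2) :
    ∃ i j m n : ℤ, IsCoprime j i ∧ Even i ∧ Odd j ∧ m ^ 2 = j ^ 4 + j ^ 2 * i ^ 2 - i ^ 4 ∧
      n ^ 2 = i ^ 2 * j ^ 2 ∧ Y ^ 2 = m ^ 2 * n ^ 2 := by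
  have hX2 : 0 < X ^ 2 := by positivity
  have hcY : IsCoprime X Y := hc.of_mul_right_right
  have hZ : Odd Z := by
    have : Odd (Z ^ 2) := by
      rw [← h, show X ^ 4 + X ^ 2 * (2 * Y) ^ 2 - (2 * Y) ^ 4 = X ^ 4 + 2 * (2 * (X ^ 2 * Y ^ 2) - 8 * Y ^ 4) by ring]
      exact (hX.pow).add_even (even_two_mul _)
    exact (Int.odd_pow' two_ne_zero).mp this
  obtain ⟨c, hcc⟩ : ∃ c, X ^ 2 - Z = 2 * c := by
    obtain ⟨r, hr⟩ := (hX.pow (n := 2)).sub_odd hZ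
    exact ⟨r, by rw [hr]; ring⟩
  have hsum : (c + Y ^ 2) + (c + Y ^ 2 + Z) = X ^ 2 + 2 * Y ^ 2 := by linear_combination -hcc
  obtain ⟨m, n, hmn, hYmn⟩ := step_five (c + Y ^ 2) (c + Y ^ 2 + Z) Y
    (by
      have hc' : Z = X ^ 2 - 2 * c := by linarith
      subst hc'
      linarith)
    (by rw [hsum]; nlinarith [sq_nonneg Y]) (by
      intro ℓ hℓ h1 h2 h3
      have h4 : ℓ ∣ X * X := by
        have : X * X = (c + Y ^ 2) + (c + Y ^ 2 + Z) - Y * (2 * Y) := by rw [hsum]; ring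
        rw [this]
        exact dvd_sub (dvd_add h1 h2) (h3.mul_right _)
      exact no_common X Y ℓ hcY hℓ ((hℓ.dvd_or_dvd h4).elim id id) h3)
  have hY2 := sq_eq_of_pm _ _ hYmn
  have hXmn : X ^ 2 = (m ^ 2 - n ^ 2) ^ 2 + 4 * n ^ 4 := by
    linear_combination hmn - hsum - 2 * hY2
  have hE : Odd (m ^ 2 - n ^ 2) := by
    have : Odd ((m ^ 2 - n ^ 2) ^ 2) := by
      rw [show (m ^ 2 - n ^ 2) ^ 2 = X ^ 2 - 2 * (2 * n ^ 4) by linarith]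
      exact (hX.pow).sub_even (even_two_mul _)
    exact (Int.odd_pow' two_ne_zero).mp this
  have hn : Even n := by
    rw [← Int.not_odd_iff_even]
    intro hno
    have h1 := odd_mod8 _ hX
    have h2 := odd_mod8 _ hE
    have h3 := odd_mod8 _ (hno.pow (n := 2))
    rw [← pow_mul] at h3
    norm_num at h3
    omega
  have hm : Odd m := by
    have : Odd (m ^ 2) := by
      have := hE.add_even (hn.pow_of_ne_zero two_ne_zero)
      simpa using this
    exact (Int.odd_pow' two_ne_zero).mp this
  obtain ⟨D, hD⟩ : ∃ D, X - (m ^ 2 - n ^ 2) = 2 * D := by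
    obtain ⟨r, hr⟩ := hX.sub_odd hE
    exact ⟨r, by rw [hr]; ring⟩
  have hprod : D * (X - D) = n ^ 4 := by
    have : m ^ 2 - n ^ 2 = X - 2 * D := by linarith
    rw [this] at hXmn
    linarith
  have hnY := dvd_of_pm _ _ _ hYmn
  obtain ⟨i, j, hi, hj, hnij, hcij⟩ := step_fourth D (X - D) n hprod (by linarith) (by
    intro ℓ hℓ h1 h2 h3
    have h4 : ℓ ∣ X := by
      have := dvd_add h1 h2
      simpa using this
    exact no_common X Y ℓ hcY hℓ h4 (h3.trans hnY))
  have hn2 := sq_eq_of_pm _ _ hnij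
  have hm2 : m ^ 2 = j ^ 4 + j ^ 2 * i ^ 2 - i ^ 4 := by
    linear_combination -hD - hi + hj + hn2
  have hij : Even i ∧ Odd j := by
    have h1 := odd_mod8 _ hm
    rcases Int.even_or_odd j with hj' | hj'
    · exfalso
      have h2 : Odd i := by
        rw [← Int.not_even_iff_odd]
        intro hi'
        exact no_common i j 2 hcij two_prime hi'.two_dvd hj'.two_dvd
      have h3 := even_sq_mod4 _ hj'
      have h4 := odd_mod8 _ (h2.pow (n := 2))
      obtain ⟨b, hb⟩ : ∃ b, j ^ 2 = 4 * b := ⟨j ^ 2 / 4, by omega⟩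
      have h5 : m ^ 2 = 4 * (4 * b ^ 2 + b * i ^ 2) - (i ^ 2) ^ 2 := by
        rw [hm2, show j ^ 4 = (j ^ 2) ^ 2 by ring, hb]; ring
      omega
    · refine ⟨?_, hj'⟩
      have : Even (i * j) := by
        rcases hnij with h | h
        · rw [← h]; exact hn
        · rw [h, even_neg] at hn; exact hn
      rcases Int.even_mul.mp this with h | h
      · exact h
      · exact absurd hj' (Int.not_odd_iff_even.mpr h)
  exact ⟨i, j, m, n, hcij.symm, hij.1, hij.2, hm2, by rw [hn2]; ring, by rw [hY2]; ring⟩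

theorem sq_one_of (a : ℤ) (h0 : a ≠ 0) (h : a ^ 2 ≤ 1) : a ^ 2 = 1 := by
  have : 0 < a ^ 2 := by positivity
  omega

theorem quartic_key (N : ℕ) : ∀ X Y Z : ℤ, Y.natAbs ≤ N → Odd X → IsCoprime X Y →
    X ^ 4 + X ^ 2 * Y ^ 2 - Y ^ 4 = Z ^ 2 → Y = 0 ∨ (X ^ 2 = 1 ∧ Y ^ 2 = 1) := by
  induction N with
  | zero =>
    intro X Y Z hN _ _ _
    left; omega
  | succ N ih =>
    intro X Y Z hN hX hc h
    wlog hX0 : 0 < X generalizing X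
    · have hXn : X ≠ 0 := by rintro rfl; exact absurd hX (by decide)
      have := this (-X) (by simpa using hX) hc.neg_left (by linear_combination h) (by omega)
      simpa using this
    by_cases hY0 : Y = 0
    · exact Or.inl hY0
    right
    rcases Int.even_or_odd Y with hY | hY
    · exfalso
      obtain ⟨Y', rfl⟩ := hY.two_dvd
      obtain ⟨i, j, m, n, hcji, hi, hj, hm, hn, hYmn⟩ := even_step X Y' Z hX0 hX hc h
      have hY'0 : 0 < Y' ^ 2 := by
        have : Y' ≠ 0 := by rintro rfl; exact hY0 rfl
        positivity
      have hm0 : m ≠ 0 := by rintro rfl; rw [hYmn] at hY'0; simp at hY'0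
      have hj0 : j ≠ 0 := by rintro rfl; exact absurd hj (by decide)
      have hle : i ^ 2 ≤ Y' ^ 2 := by
        rw [hYmn, hn]
        have h1 : 1 ≤ m ^ 2 := Int.add_one_le_of_lt (show 0 < m ^ 2 by positivity)
        have h2 : 1 ≤ j ^ 2 := Int.add_one_le_of_lt (show 0 < j ^ 2 by positivity)
        have h3 : 1 ≤ m ^ 2 * j ^ 2 := by nlinarith
        nlinarith [sq_nonneg i]
      have hle' : i.natAbs ≤ Y'.natAbs := Int.natAbs_le_iff_sq_le.mpr hle
      rcases ih j i m (by omega) hj hcji hm.symm with h0 | ⟨_, h1⟩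
      · rw [h0] at hn
        rw [hYmn, hn] at hY'0
        simp at hY'0
      · have := even_sq_mod4 i hi
        omega
    · obtain ⟨i, j, m, n, hcji, hi, hj, hm, hn, hYmn, hXmn⟩ := odd_step X Y Z hX0 hX hY hc h
      have hY'0 : 0 < Y ^ 2 := by positivity
      have hm0 : m ≠ 0 := by rintro rfl; rw [hYmn] at hY'0; simp at hY'0
      have hj0 : j ≠ 0 := by rintro rfl; exact absurd hj (by decide)
      have hi0 : i ≠ 0 := by rintro rfl; exact absurd hi (by decide)
      have h1 : 1 ≤ m ^ 2 := Int.add_one_le_of_lt (show 0 < m ^ 2 by positivity)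
      have h2 : 1 ≤ j ^ 2 := Int.add_one_le_of_lt (show 0 < j ^ 2 by positivity)
      have hi2 : 0 < i ^ 2 := by positivity
      have key : j ^ 2 = 1 ∧ i ^ 2 = 1 := by
        by_cases hlt : i ^ 2 < Y ^ 2
        · have hlt' : i.natAbs < Y.natAbs := Int.natAbs_lt_iff_sq_lt.mpr hlt
          rcases ih j i m (by omega) hj hcji hm.symm with h0 | h0
          · exact absurd h0 hi0
          · exact h0
        · rw [hYmn, hn] at hlt
          have h3 : m ^ 2 * j ^ 2 ≤ 1 := by
            by_contra hcon
            push Not at hcon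
            exact hlt (by nlinarith)
          have hj1 : j ^ 2 = 1 := by nlinarith
          have hm1 : m ^ 2 = 1 := by nlinarith
          refine ⟨hj1, ?_⟩
          rw [show j ^ 4 = (j ^ 2) ^ 2 by ring, hj1, hm1] at hm
          have : i ^ 2 * (i ^ 2 - 1) = 0 := by linear_combination hm
          rcases mul_eq_zero.mp this with h | h
          · omega
          · omega
      obtain ⟨hj1, hi1⟩ := key
      rw [show j ^ 4 = (j ^ 2) ^ 2 by ring, show i ^ 4 = (i ^ 2) ^ 2 by ring, hj1, hi1] at hm
      rw [hj1, hi1] at hn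
      rw [hm, hn] at hYmn
      rw [show n ^ 4 = (n ^ 2) ^ 2 by ring, hm, hn] at hXmn
      constructor <;> linarith


theorem s_one (a b U V : ℤ) (hc : IsCoprime a b) (hb : b ≠ 0) (hU : a ^ 3 + 4 * b ^ 6 = U ^ 2)
    (hV : (a ^ 2 + 4 * a * b ^ 2) ^ 2 + 64 * b ^ 8 = V ^ 2) : a = 0 := by
  have hb8 : 0 < b ^ 8 := by positivity
  wlog hV0 : 0 < V generalizing V
  · have hVn : V ≠ 0 := by
      rintro rfl
      nlinarith [sq_nonneg (a ^ 2 + 4 * a * b ^ 2)]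
    exact this (-V) (by rw [hV]; ring) (by omega)
  rcases Int.even_or_odd a with ha | ha
  · -- the numerator is even
    have hbo : Odd b := by
      rw [← Int.not_even_iff_odd]
      intro hbe
      exact no_common a b 2 hc two_prime ha.two_dvd hbe.two_dvd
    obtain ⟨a', rfl⟩ := ha.two_dvd
    obtain ⟨V1, rfl⟩ : ∃ V1, V = 4 * V1 := by
      have h1 : (4 : ℤ) ^ 2 ∣ V ^ 2 := ⟨(a' ^ 2 + 2 * a' * b ^ 2) ^ 2 + 4 * b ^ 8, by rw [← hV]; ring⟩
      exact (Int.pow_dvd_pow_iff two_ne_zero).mp h1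
    have hV1 : (a' ^ 2 + 2 * a' * b ^ 2) ^ 2 + 4 * b ^ 8 = V1 ^ 2 := by linarith
    have ha' : Even a' := by
      rw [← Int.not_odd_iff_even]
      intro ho
      have h1 := odd_mod8 _ ((ho.pow (n := 2)).add_even ((even_two_mul (a' * b ^ 2))))
      rw [← mul_assoc] at h1
      have h2 := odd_mod8 _ (hbo.pow (n := 4))
      rw [← pow_mul] at h2
      norm_num at h2
      have h3 : Odd V1 := by
        rw [← Int.not_even_iff_odd]
        intro he
        have := even_sq_mod4 _ he
        omega
      have := odd_mod8 _ h3
      omega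
    obtain ⟨σ, rfl⟩ := ha'.two_dvd
    obtain ⟨W, rfl⟩ : ∃ W, V1 = 2 * W := by
      have h1 : (2 : ℤ) ^ 2 ∣ V1 ^ 2 := ⟨4 * (σ ^ 2 + σ * b ^ 2) ^ 2 + b ^ 8, by rw [← hV1]; ring⟩
      exact (Int.pow_dvd_pow_iff two_ne_zero).mp h1
    have hprod : (W - 2 * (σ * (σ + b ^ 2))) * (W + 2 * (σ * (σ + b ^ 2))) = (b ^ 2) ^ 4 := by
      linarith
    obtain ⟨i, j, hi, hj, hij, hcij⟩ := step_fourth _ _ _ hprod (by linarith) (by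
      intro ℓ hℓ h1 h2 h3
      have h3' : ℓ ∣ b := hℓ.dvd_of_dvd_pow h3
      have h2' := not_two_of_odd ℓ b hℓ h3' hbo
      have h4 : ℓ ∣ 2 * (2 * (σ * (σ + b ^ 2))) := by
        have := dvd_sub h2 h1
        rwa [show (W + 2 * (σ * (σ + b ^ 2))) - (W - 2 * (σ * (σ + b ^ 2)))
          = 2 * (2 * (σ * (σ + b ^ 2))) by ring] at this
      have h5 := dvd_of_two_mul _ _ hℓ h2' (dvd_of_two_mul _ _ hℓ h2' h4)
      have h6 : ℓ ∣ σ := by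
        rcases hℓ.dvd_or_dvd h5 with h | h
        · exact h
        · exact (dvd_add_left h3).mp h
      exact no_common _ b ℓ hc hℓ ((h6.mul_left 2).mul_left 2) h3')
    have h2 := sq_eq_of_pm _ _ hij
    obtain ⟨hio, hjo⟩ := odd_of_pm _ _ _ hij (hbo.pow)
    have hK : 4 * (σ * (σ + b ^ 2)) = j ^ 4 - i ^ 4 := by linarith
    rcases quartic_key _ j i (2 * σ + b ^ 2) le_rfl hjo hcij.symm (by
      linear_combination -hK - h2) with h | ⟨h, h'⟩
    · rw [h] at hio
      exact absurd hio (by decide)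
    · rw [show j ^ 4 = (j ^ 2) ^ 2 by ring, show i ^ 4 = (i ^ 2) ^ 2 by ring, h, h'] at hK
      have h0 : σ * (σ + b ^ 2) = 0 := by linarith
      rcases mul_eq_zero.mp h0 with h | h
      · rw [h]; ring
      · exfalso
        have hσ : σ = -b ^ 2 := by linarith
        rw [hσ] at hU
        have : 0 < b ^ 6 := by positivity
        nlinarith [sq_nonneg U]
  · -- the numerator is odd
    have hAo : Odd (a ^ 2 + 4 * a * b ^ 2) := by
      rw [show a ^ 2 + 4 * a * b ^ 2 = a ^ 2 + 2 * (2 * a * b ^ 2) by ring]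
      exact (ha.pow).add_even (even_two_mul _)
    have hVo : Odd V := by
      have : Odd (V ^ 2) := by
        rw [← hV, show 64 * b ^ 8 = 2 * (32 * b ^ 8) by ring]
        exact (hAo.pow).add_even (even_two_mul _)
      exact (Int.odd_pow' two_ne_zero).mp this
    obtain ⟨D, hD⟩ : ∃ D, V - (a ^ 2 + 4 * a * b ^ 2) = 2 * D := by
      obtain ⟨r, hr⟩ := hVo.sub_odd hAo
      exact ⟨r, by rw [hr]; ring⟩
    have hA : a ^ 2 + 4 * a * b ^ 2 = V - 2 * D := by linarith
    have hprod : D * (V - D) = (2 * b ^ 2) ^ 4 := by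
      rw [hA] at hV
      linarith
    obtain ⟨i, j, hi, hj, hij, hcij⟩ := step_fourth _ _ _ hprod (by linarith) (by
      intro ℓ hℓ h1 h2 h3
      have h4 : ℓ ∣ V := by
        have := dvd_add h1 h2
        simpa using this
      have h2' := not_two_of_odd ℓ V hℓ h4 hVo
      have h5 : ℓ ∣ b := hℓ.dvd_of_dvd_pow (dvd_of_two_mul _ _ hℓ h2' h3)
      have h6 : ℓ ∣ a ^ 2 := by
        rw [show a ^ 2 = V - 2 * D - b * (4 * a * b) by linear_combination hA]
        exact dvd_sub (dvd_sub h4 (h1.mul_left 2)) (h5.mul_right _)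
      exact no_common a b ℓ hc hℓ (hℓ.dvd_of_dvd_pow h6) h5)
    have h2 := sq_eq_of_pm _ _ hij
    have hkey : j ^ 4 + j ^ 2 * i ^ 2 - i ^ 4 = (a + 2 * b ^ 2) ^ 2 := by
      linear_combination -hA + hi - hj - h2
    have hje : Odd j ∧ Even i := by
      rcases Int.even_or_odd j with hj' | hj'
      · exfalso
        have hio : Odd i := by
          rw [← Int.not_even_iff_odd]
          intro hi'
          exact no_common i j 2 hcij two_prime hi'.two_dvd hj'.two_dvd
        have h3 := even_sq_mod4 _ hj'
        have h4 := odd_mod8 _ (hio.pow (n := 2))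
        have h5 := odd_mod8 _ (ha.add_even (even_two_mul (b ^ 2)))
        obtain ⟨t, ht⟩ : ∃ t, j ^ 2 = 4 * t := ⟨j ^ 2 / 4, by omega⟩
        have h6 : (a + 2 * b ^ 2) ^ 2 = 4 * (4 * t ^ 2 + t * i ^ 2) - (i ^ 2) ^ 2 := by
          rw [← hkey, show j ^ 4 = (j ^ 2) ^ 2 by ring, ht]; ring
        omega
      · refine ⟨hj', ?_⟩
        have : Even (i * j) := by
          rcases hij with h | h
          · rw [← h]; exact even_two_mul _
          · have := even_two_mul (b ^ 2)
            rw [h, even_neg] at this; exact this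
        rcases Int.even_mul.mp this with h | h
        · exact h
        · exact absurd hj' (Int.not_odd_iff_even.mpr h)
    exfalso
    rcases quartic_key _ j i _ le_rfl hje.1 hcij.symm hkey with h | ⟨_, h'⟩
    · rw [h] at hij
      have hb2 : 0 < b ^ 2 := by positivity
      rcases hij with h | h <;> linarith
    · have := even_sq_mod4 _ hje.2
      omega

theorem s_even (a c s u : ℤ) (hc : IsCoprime a c) (hs : Odd s) (h : a ^ 3 + 4 * c ^ 3 = 2 * s * u ^ 2) :
    False := by
  have ha : Even a := by
    have : Even (a ^ 3) := ⟨s * u ^ 2 - 2 * c ^ 3, by linarith⟩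
    exact (Int.even_pow' (by norm_num)).mp this
  obtain ⟨a', rfl⟩ := ha.two_dvd
  have hu : Even u := by
    have h1 : Even (s * u ^ 2) := ⟨2 * a' ^ 3 + c ^ 3, by linarith⟩
    rcases Int.even_mul.mp h1 with h2 | h2
    · exact absurd hs (Int.not_odd_iff_even.mpr h2)
    · exact (Int.even_pow' (by norm_num)).mp h2
  obtain ⟨u', rfl⟩ := hu.two_dvd
  have hce : Even (c ^ 3) := ⟨s * u' ^ 2 - a' ^ 3, by linarith⟩
  have hce' : Even c := (Int.even_pow' (by norm_num)).mp hce
  exact no_common _ c 2 hc two_prime ha.two_dvd hce'.two_dvd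

theorem split (a c k : ℤ) (hc : IsCoprime a c) (hc0 : 0 < c)
    (h : (a ^ 3 + 4 * c ^ 3) * ((a ^ 2 + 4 * a * c) ^ 2 + 64 * c ^ 4) = k ^ 2)
    (hcf : IsCoprime c (a ^ 3 + 4 * c ^ 3)) :
    ∃ s u v : ℤ, (s = 1 ∨ s = 17) ∧ a ^ 3 + 4 * c ^ 3 = s * u ^ 2 ∧
      (a ^ 2 + 4 * a * c) ^ 2 + 64 * c ^ 4 = s * v ^ 2 := by
  have hg0 : 0 < (a ^ 2 + 4 * a * c) ^ 2 + 64 * c ^ 4 := by positivity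
  have hres : (388 * c ^ 3 + 896 * a * c ^ 2 + 304 * a ^ 2 * c + 31 * a ^ 3) * (a ^ 3 + 4 * c ^ 3)
    + (48 * c ^ 2 - 56 * a * c - 31 * a ^ 2) * ((a ^ 2 + 4 * a * c) ^ 2 + 64 * c ^ 4) = 4624 * c ^ 6 := by ring
  generalize hf : a ^ 3 + 4 * c ^ 3 = f at *
  generalize hg : (a ^ 2 + 4 * a * c) ^ 2 + 64 * c ^ 4 = g at *
  have hdf : (Int.gcd f g : ℤ) ∣ f := Int.gcd_dvd_left f g
  have hdg : (Int.gcd f g : ℤ) ∣ g := Int.gcd_dvd_right f g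
  have hdpos : 0 < Int.gcd f g := Int.gcd_pos_of_ne_zero_right f hg0.ne'
  have hdR : (Int.gcd f g : ℤ) ∣ 4624 := by
    have h1 : (Int.gcd f g : ℤ) ∣ 4624 * c ^ 6 := by
      rw [← hres]
      exact dvd_add (hdf.mul_left _) (hdg.mul_left _)
    have h2 : IsCoprime (Int.gcd f g : ℤ) (c ^ 6) :=
      (IsCoprime.of_isCoprime_of_dvd_left hcf.symm hdf).pow_right
    exact h2.dvd_of_dvd_mul_right h1
  obtain ⟨s, t, hst, hsf⟩ := Nat.sq_mul_squarefree (Int.gcd f g)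
  have hs34 : s ∣ 34 := by
    have h1 : s ∣ 34 ^ 4 := by
      have h2 : Int.gcd f g ∣ 4624 := by exact_mod_cast hdR
      exact ((Dvd.intro_left _ hst).trans h2).trans (by norm_num)
    exact (hsf.dvd_pow_iff_dvd (by norm_num)).mp h1
  have hcop : IsCoprime (f / Int.gcd f g) (g / Int.gcd f g) :=
    Int.isCoprime_iff_gcd_eq_one.mpr (Int.gcd_ediv_gcd_ediv_gcd hdpos)
  obtain ⟨f', hf'⟩ := hdf
  obtain ⟨g', hg'⟩ := hdg
  have hdz : (0 : ℤ) < Int.gcd f g := by exact_mod_cast hdpos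
  generalize Int.gcd f g = d at *
  have hfd : f / d = f' := by rw [hf']; exact Int.mul_ediv_cancel_left _ hdz.ne'
  have hgd : g / d = g' := by rw [hg']; exact Int.mul_ediv_cancel_left _ hdz.ne'
  rw [hfd, hgd] at hcop
  have hg'0 : 0 < g' := by
    rw [hg'] at hg0
    exact (mul_pos_iff_of_pos_left hdz).mp hg0
  obtain ⟨k', rfl⟩ : (d : ℤ) ∣ k := by
    have h1 : (d : ℤ) ^ 2 ∣ k ^ 2 := ⟨f' * g', by rw [← h, hf', hg']; ring⟩
    exact (Int.pow_dvd_pow_iff two_ne_zero).mp h1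
  have hfg : f' * g' = k' ^ 2 := by
    rw [hf', hg'] at h
    have h2 : (d : ℤ) ^ 2 * (f' * g') = d ^ 2 * k' ^ 2 := by linear_combination h
    exact mul_left_cancel₀ (by positivity) h2
  have hf'0 : 0 ≤ f' := by
    by_contra hneg
    push Not at hneg
    nlinarith [sq_nonneg k']
  obtain ⟨u, v, _, _, rfl, rfl, _⟩ := sq_factors f' g' k' hcop hf'0 hg'0.le hfg
  have hdz' : (d : ℤ) = t ^ 2 * s := by exact_mod_cast hst.symm
  have hfs : f = s * (t * u) ^ 2 := by rw [hf', hdz']; ring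
  have hgs : g = s * (t * v) ^ 2 := by rw [hg', hdz']; ring
  have hs : s = 1 ∨ s = 2 ∨ s = 17 ∨ s = 34 := by
    have h1 : s ∈ Nat.divisors 34 := Nat.mem_divisors.mpr ⟨hs34, by norm_num⟩
    have h2 : Nat.divisors 34 = {1, 2, 17, 34} := by decide +kernel
    rw [h2] at h1
    simpa using h1
  rcases hs with rfl | rfl | rfl | rfl
  · exact ⟨1, t * u, t * v, Or.inl rfl, by exact_mod_cast hfs, by exact_mod_cast hgs⟩
  · exact (s_even a c 1 (t * u) hc (by decide) (by rw [hf, hfs]; push_cast; ring)).elim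
  · exact ⟨17, t * u, t * v, Or.inr rfl, by exact_mod_cast hfs, by exact_mod_cast hgs⟩
  · exact (s_even a c 17 (t * u) hc (by decide) (by rw [hf, hfs]; push_cast; ring)).elim

theorem x_values (x y : ℚ) (h : y ^ 2 = (x ^ 3 + 4) * (x ^ 4 + 8 * x ^ 3 + 16 * x ^ 2 + 64)) :
    x = 0 ∨ x = 4 := by
  obtain ⟨a, c, hc0, hc, hx⟩ : ∃ a c : ℤ, 0 < c ∧ IsCoprime a c ∧ x = a / c := by
    refine ⟨x.num, x.den, by exact_mod_cast x.pos, ?_, (Rat.num_div_den x).symm⟩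
    rw [Int.isCoprime_iff_gcd_eq_one]
    exact x.reduced
  have hcq : (c : ℚ) ≠ 0 := by exact_mod_cast hc0.ne'
  have hxc : x * c = a := by rw [hx]; field_simp
  obtain ⟨w, hw⟩ : IsSquare (c * ((a ^ 3 + 4 * c ^ 3) * ((a ^ 2 + 4 * a * c) ^ 2 + 64 * c ^ 4))) := by
    rw [← Rat.isSquare_intCast_iff]
    refine ⟨y * c ^ 4, ?_⟩
    push_cast
    rw [← hxc]
    linear_combination (-(c : ℚ) ^ 8) * h
  have hcf : IsCoprime c (a ^ 3 + 4 * c ^ 3) := by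
    have h1 : IsCoprime c (a ^ 3) := hc.symm.pow_right
    have h2 := h1.add_mul_left_right (4 * c ^ 2)
    rwa [show a ^ 3 + c * (4 * c ^ 2) = a ^ 3 + 4 * c ^ 3 by ring] at h2
  have hcg : IsCoprime c ((a ^ 2 + 4 * a * c) ^ 2 + 64 * c ^ 4) := by
    have h1 : IsCoprime c (a ^ 4) := hc.symm.pow_right
    have h2 := h1.add_mul_left_right (8 * a ^ 3 + 16 * a ^ 2 * c + 64 * c ^ 3)
    rwa [show a ^ 4 + c * (8 * a ^ 3 + 16 * a ^ 2 * c + 64 * c ^ 3)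
      = (a ^ 2 + 4 * a * c) ^ 2 + 64 * c ^ 4 by ring] at h2
  have hfg0 : 0 ≤ (a ^ 3 + 4 * c ^ 3) * ((a ^ 2 + 4 * a * c) ^ 2 + 64 * c ^ 4) := by
    by_contra hneg
    push Not at hneg
    nlinarith [mul_self_nonneg w]
  obtain ⟨b, k, hb0, _, rfl, hk, _⟩ := sq_factors c _ w (hcf.mul_right hcg) hc0.le hfg0
    (by rw [hw]; ring)
  have hb : b ≠ 0 := by rintro rfl; simp at hc0
  have hbq : (b : ℚ) ≠ 0 := by exact_mod_cast hb
  obtain ⟨s, u, v, hs, hu, hv⟩ := split a (b ^ 2) k hc hc0 hk hcf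
  rcases hs with rfl | rfl
  · left
    have ha := s_one a b u v ((IsCoprime.pow_right_iff two_pos).mp hc) hb (by linear_combination hu)
      (by linear_combination hv)
    rw [hx, ha]; simp
  · right
    apply JQ.torsor x (v / b ^ 4) (17 * u / b ^ 3)
    · have hvq : ((a : ℚ) ^ 2 + 4 * a * b ^ 2) ^ 2 + 64 * (b ^ 2) ^ 4 = 17 * v ^ 2 := by exact_mod_cast hv
      rw [hx]; push_cast; field_simp
      linear_combination -hvq
    · have huq : (a : ℚ) ^ 3 + 4 * (b ^ 2) ^ 3 = 17 * u ^ 2 := by exact_mod_cast hu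
      rw [hx]; push_cast; field_simp
      linear_combination huq

/-- The affine rational points of the hyperelliptic curve
`y² = (x³ + 4)(x⁴ + 8x³ + 16x² + 64)` are exactly `(0, ±16)` and `(4, ±272)`. -/
theorem genus3_curve_points (x y : ℚ) :
    y ^ 2 = (x ^ 3 + 4) * (x ^ 4 + 8 * x ^ 3 + 16 * x ^ 2 + 64) ↔
    (x = 0 ∧ y = 16) ∨ (x = 0 ∧ y = -16) ∨ (x = 4 ∧ y = 272) ∨ (x = 4 ∧ y = -272) := by
  constructor
  · intro h
    rcases x_values x y h with rfl | rfl
    · have h1 : y ^ 2 = 16 ^ 2 := by rw [h]; norm_num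
      rcases sq_eq_sq_iff_eq_or_eq_neg.mp h1 with h2 | h2
      · exact Or.inl ⟨rfl, h2⟩
      · exact Or.inr (Or.inl ⟨rfl, h2⟩)
    · have h1 : y ^ 2 = 272 ^ 2 := by rw [h]; norm_num
      rcases sq_eq_sq_iff_eq_or_eq_neg.mp h1 with h2 | h2
      · exact Or.inr (Or.inr (Or.inl ⟨rfl, h2⟩))
      · exact Or.inr (Or.inr (Or.inr ⟨rfl, h2⟩))
  · rintro (⟨rfl, rfl⟩ | ⟨rfl, rfl⟩ | ⟨rfl, rfl⟩ | ⟨rfl, rfl⟩) <;> norm_num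
end

section
/- The set of pairs (x,y) ∈ ℚ × ℚ satisfying y² = (x⁴ − 1)(x² − 2x − 1)(x⁸ − 8x⁵ + 2x⁴ + 8x³ + 1) is exactly {(1, 0), (−1, 0), (0, 1), (0, −1)}. -/
/-- Integers without a common prime are coprime. -/
theorem coprime_of_zmod {m n : ℤ}
    (h : ∀ p : ℕ, p.Prime → (m : ZMod p) = 0 → (n : ZMod p) = 0 → False) :
    IsCoprime m n := by
  rw [Int.isCoprime_iff_gcd_eq_one]
  by_contra hne
  obtain ⟨p, hp, hd⟩ := Nat.exists_prime_and_dvd hne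
  have hd' : (p : ℤ) ∣ (Int.gcd m n : ℤ) := by exact_mod_cast hd
  refine h p hp ?_ ?_
  · exact (ZMod.intCast_zmod_eq_zero_iff_dvd m p).2 (hd'.trans (Int.gcd_dvd_left ..))
  · exact (ZMod.intCast_zmod_eq_zero_iff_dvd n p).2 (hd'.trans (Int.gcd_dvd_right ..))

theorem zmod_not_both {a b : ℤ} (hab : IsCoprime a b) {p : ℕ} (hp : p.Prime)
    (ha : (a : ZMod p) = 0) (hb : (b : ZMod p) = 0) : False := by
  obtain ⟨u, v, huv⟩ := hab
  have := Fact.mk hp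
  have h := congrArg (Int.cast : ℤ → ZMod p) huv
  push_cast at h
  rw [ha, hb] at h
  simp at h

theorem zmod_two_ne {n : ℤ} (hn : n % 2 = 1) {p : ℕ} (hp : p.Prime)
    (h : (n : ZMod p) = 0) : (2 : ZMod p) ≠ 0 := by
  intro h2
  have := Fact.mk hp
  have e : n = 2 * (n / 2) + 1 := by omega
  have h' := congrArg (Int.cast : ℤ → ZMod p) e
  push_cast at h'
  rw [h, h2] at h'
  simp at h'

theorem field_Q_A {K : Type*} [Field K] (a b : K) (h2 : (2 : K) ≠ 0)
    (hQ : a ^ 2 - 2 * a * b - b ^ 2 = 0) (hA : a ^ 4 - b ^ 4 = 0) : a = 0 ∧ b = 0 := by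
  have hb0 : b = 0 → a = 0 ∧ b = 0 := by
    intro hb
    subst hb
    refine ⟨?_, rfl⟩
    have : a ^ 2 = 0 := by linear_combination hQ
    exact pow_eq_zero_iff (two_ne_zero) |>.1 this
  have hf : (a ^ 2 + b ^ 2) * (a ^ 2 - b ^ 2) = 0 := by linear_combination hA
  rcases mul_eq_zero.1 hf with hS | hD
  · have h1 : 2 * (b * (a + b)) = 0 := by linear_combination hS - hQ
    rcases mul_eq_zero.1 ((mul_eq_zero.1 h1).resolve_left h2) with hb | hb
    · exact hb0 hb
    · have ha : a = -b := by linear_combination hb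
      subst ha
      have : 2 * b ^ 2 = 0 := by linear_combination hS
      exact hb0 (pow_eq_zero_iff (two_ne_zero) |>.1 ((mul_eq_zero.1 this).resolve_left h2))
  · have h1 : 2 * (a * b) = 0 := by linear_combination hD - hQ
    rcases mul_eq_zero.1 ((mul_eq_zero.1 h1).resolve_left h2) with ha | hb
    · subst ha
      have : b ^ 2 = 0 := by linear_combination -hD
      exact hb0 (pow_eq_zero_iff (two_ne_zero) |>.1 this)
    · exact hb0 hb

theorem field_Q_G {K : Type*} [Field K] (a b : K) (h2 : (2 : K) ≠ 0) (h5 : (5 : K) ≠ 0)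
    (hQ : a ^ 2 - 2 * a * b - b ^ 2 = 0)
    (hG : (a ^ 4 + b ^ 4) ^ 2 - 8 * a ^ 3 * b ^ 3 * (a ^ 2 - b ^ 2) = 0) : a = 0 ∧ b = 0 := by
  have hD : a ^ 2 - b ^ 2 = 2 * a * b := by linear_combination hQ
  have h4 : a ^ 4 + b ^ 4 = 6 * a ^ 2 * b ^ 2 := by
    linear_combination (a ^ 2 - b ^ 2 + 2 * a * b) * hD
  rw [h4, hD] at hG
  have h1 : 2 * 2 * 5 * (a * b) ^ 4 = 0 := by linear_combination hG
  have h3 : a * b = 0 := by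
    have := (mul_eq_zero.1 h1).resolve_left (mul_ne_zero (mul_ne_zero h2 h2) h5)
    exact pow_eq_zero_iff (by norm_num) |>.1 this
  rcases mul_eq_zero.1 h3 with ha | hb
  · subst ha
    exact ⟨rfl, pow_eq_zero_iff (two_ne_zero) |>.1 (by linear_combination -hQ : b ^ 2 = 0)⟩
  · subst hb
    exact ⟨pow_eq_zero_iff (two_ne_zero) |>.1 (by linear_combination hQ : a ^ 2 = 0), rfl⟩

theorem field_A_G {K : Type*} [Field K] (a b : K) (h2 : (2 : K) ≠ 0)
    (h17 : (17 : K) = 0 → a ^ 2 + b ^ 2 = 0 → a = 0 ∧ b = 0)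
    (hA : a ^ 4 - b ^ 4 = 0)
    (hG : (a ^ 4 + b ^ 4) ^ 2 - 8 * a ^ 3 * b ^ 3 * (a ^ 2 - b ^ 2) = 0) : a = 0 ∧ b = 0 := by
  have hb0 : b = 0 → a = 0 ∧ b = 0 := by
    intro hb
    subst hb
    refine ⟨?_, rfl⟩
    have : a ^ 4 = 0 := by linear_combination hA
    exact pow_eq_zero_iff (by norm_num) |>.1 this
  have h4 : a ^ 4 = b ^ 4 := by linear_combination hA
  have hf : (a ^ 2 + b ^ 2) * (a ^ 2 - b ^ 2) = 0 := by linear_combination hA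
  rcases mul_eq_zero.1 hf with hS | hD
  · have hS' : a ^ 2 = - b ^ 2 := by linear_combination hS
    have h3 : a ^ 3 = - a * b ^ 2 := by linear_combination a * hS'
    rw [h4, h3, hS'] at hG
    have h1 : 2 * 2 * (b ^ 7 * (b - 4 * a)) = 0 := by linear_combination hG
    rcases mul_eq_zero.1 ((mul_eq_zero.1 h1).resolve_left (mul_ne_zero h2 h2)) with hb | hb
    · exact hb0 (pow_eq_zero_iff (by norm_num) |>.1 hb)
    · have hb' : b = 4 * a := by linear_combination hb
      by_cases h : (17 : K) = 0
      · exact h17 h hS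
      · subst hb'
        have : 17 * a ^ 2 = 0 := by linear_combination hS
        have ha := pow_eq_zero_iff (two_ne_zero) |>.1 ((mul_eq_zero.1 this).resolve_left h)
        subst ha
        simp
  · rw [h4, hD] at hG
    have h1 : 2 * 2 * b ^ 8 = 0 := by linear_combination hG
    exact hb0 (pow_eq_zero_iff (by norm_num) |>.1
      ((mul_eq_zero.1 h1).resolve_left (mul_ne_zero h2 h2)))

theorem mod5_Q : ∀ a b : ZMod 5, a ^ 2 - 2 * a * b - b ^ 2 = 0 → a = 0 ∧ b = 0 := by
  decide

theorem mod17_aux : ∀ b q : ZMod 17,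
    (7 * b ^ 2 = q ^ 2 ∨ 7 * b ^ 2 = - q ^ 2 ∨ 7 * b ^ 2 = 2 * q ^ 2 ∨ 7 * b ^ 2 = - (2 * q ^ 2) ∨
     6 * b ^ 2 = q ^ 2 ∨ 6 * b ^ 2 = - q ^ 2 ∨ 6 * b ^ 2 = 2 * q ^ 2 ∨ 6 * b ^ 2 = - (2 * q ^ 2)) →
    b = 0 := by
  set_option maxRecDepth 100000 in
  decide

theorem mod17_Q (a b q : ZMod 17) (hS : a ^ 2 + b ^ 2 = 0)
    (hQ : a ^ 2 - 2 * a * b - b ^ 2 = q ^ 2 ∨ a ^ 2 - 2 * a * b - b ^ 2 = - q ^ 2 ∨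
      a ^ 2 - 2 * a * b - b ^ 2 = 2 * q ^ 2 ∨ a ^ 2 - 2 * a * b - b ^ 2 = - (2 * q ^ 2)) :
    a = 0 ∧ b = 0 := by
  have h17 : (17 : ZMod 17) = 0 := by decide
  have : Fact (Nat.Prime 17) := ⟨by norm_num⟩
  have hf : (a - 4 * b) * (a + 4 * b) = 0 := by linear_combination hS - b ^ 2 * h17
  have hb : b = 0 := by
    apply mod17_aux b q
    rcases mul_eq_zero.1 hf with h | h
    · have ha : a = 4 * b := by linear_combination h
      have e : a ^ 2 - 2 * a * b - b ^ 2 = 7 * b ^ 2 := by rw [ha]; ring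
      rw [e] at hQ
      tauto
    · have ha : a = - (4 * b) := by linear_combination h
      have e : a ^ 2 - 2 * a * b - b ^ 2 = 6 * b ^ 2 := by
        rw [ha]; linear_combination b ^ 2 * h17
      rw [e] at hQ
      tauto
  subst hb
  exact ⟨pow_eq_zero_iff (two_ne_zero) |>.1 (by linear_combination hS : a ^ 2 = 0), rfl⟩

/-- The classical descent: `x⁴ + 4 y⁴ = z²` has no primitive solution with `x` odd, `y ≠ 0`. -/
theorem descent_four : ∀ (N : ℕ) (x y z : ℤ), z.natAbs ≤ N → x % 2 = 1 → IsCoprime x y →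
    x ^ 4 + 4 * y ^ 4 = z ^ 2 → y = 0 := by
  intro N
  induction N with
  | zero =>
    intro x y z hz hx _ h
    have hz0 : z = 0 := by omega
    subst hz0
    have : y ^ 4 = 0 := by nlinarith [pow_nonneg (sq_nonneg x) 2, pow_nonneg (sq_nonneg y) 2,
      (by ring : (x ^ 2) ^ 2 = x ^ 4), (by ring : (y ^ 2) ^ 2 = y ^ 4)]
    exact pow_eq_zero_iff (by norm_num) |>.1 this
  | succ N ih =>
    intro x y z hz hx hc h
    by_contra hy
    wlog hzpos : 0 < z generalizing z
    · refine this (-z) (by simpa using hz) (by linear_combination h) ?_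
      have : z ≠ 0 := by
        rintro rfl
        have h4 : 0 < y ^ 4 := by positivity
        have h5 : 0 ≤ x ^ 4 := by positivity
        linarith
      omega
    have hx2 : x ^ 2 % 2 = 1 := by
      rw [pow_two, Int.mul_emod, hx]; norm_num
    have c2 : IsCoprime x (2 : ℤ) := ⟨1, -(x / 2), by omega⟩
    have hc1 : IsCoprime (x ^ 2) (2 * y ^ 2) := (c2.pow_left).mul_right hc.pow
    have hpt : PythagoreanTriple (x ^ 2) (2 * y ^ 2) z := by
      unfold PythagoreanTriple; linear_combination h
    obtain ⟨m, n, h1, h2, h3, h4, h5, h6⟩ :=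
      hpt.coprime_classification' (Int.isCoprime_iff_gcd_eq_one.1 hc1) hx2 hzpos
    have hmn : m * n = y ^ 2 := by linarith
    have hyp : 0 < y ^ 2 := by positivity
    have hm : 0 < m := by
      rcases h6.lt_or_eq with h | h
      · exact h
      · rw [← h] at hmn; simp at hmn; exact absurd hmn.symm (by simpa using hy)
    have hn : 0 < n := by
      by_contra hn
      nlinarith
    have hcmn := Int.isCoprime_iff_gcd_eq_one.2 h4
    obtain ⟨s, hs⟩ := Int.sq_of_isCoprime hcmn hmn
    have hs : m = s ^ 2 := by
      rcases hs with h | h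
      · exact h
      · exfalso; linarith [sq_nonneg s]
    obtain ⟨t, ht⟩ := Int.sq_of_isCoprime hcmn.symm (by rw [mul_comm]; exact hmn)
    have ht : n = t ^ 2 := by
      rcases ht with h | h
      · exact h
      · exfalso; linarith [sq_nonneg t]
    -- x² = s⁴ - t⁴
    have hct : IsCoprime x (t ^ 2) := by
      rw [← ht]
      have : IsCoprime (x ^ 2) n := by
        rw [h1]
        have : IsCoprime (m ^ 2 + n * (-n)) n := (hcmn.pow_left (m := 2)).add_mul_left_left (-n)
        convert this using 1
        ring
      exact (IsCoprime.pow_left_iff (by norm_num)).1 this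
    have hpt2 : PythagoreanTriple x (t ^ 2) m := by
      unfold PythagoreanTriple
      rw [← ht]
      linear_combination h1
    obtain ⟨p, q, k1, k2, k3, k4, k5, k6⟩ :=
      hpt2.coprime_classification' (Int.isCoprime_iff_gcd_eq_one.1 hct) hx hm
    have hcpq := Int.isCoprime_iff_gcd_eq_one.2 k4
    have hpq : 0 < p * q := by nlinarith
    have hp : 0 < p := by
      rcases k6.lt_or_eq with h | h
      · exact h
      · rw [← h] at hpq; simp at hpq
    have hq : 0 < q := by
      by_contra hq
      nlinarith
    have hsz : s.natAbs ≤ N := by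
      have e1 : s.natAbs < z.natAbs := by
        rw [Int.natAbs_lt_iff_sq_lt]
        have g1 : m * 1 ≤ m * m := mul_le_mul_of_nonneg_left (by omega) hm.le
        have g2 : 0 < n ^ 2 := by positivity
        have g3 : m < z := by rw [h3, pow_two m]; linarith
        have g4 : z * 1 ≤ z * z := mul_le_mul_of_nonneg_left (by omega) hzpos.le
        rw [← hs, pow_two z]
        linarith
      omega
    -- key step
    have key : ∀ u v : ℤ, 0 < u → 0 < v → u % 2 = 1 → v % 2 = 0 → IsCoprime u v →
        2 * u * v = t ^ 2 → u ^ 2 + v ^ 2 = s ^ 2 → False := by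
      intro u v hu hv hu2 hv2 huv e1 e2
      obtain ⟨w, rfl⟩ : ∃ w, v = 2 * w := ⟨v / 2, by omega⟩
      have huw : IsCoprime u w := huv.of_mul_right_right
      have hteven : t % 2 = 0 := by
        have : (2 : ℤ) ∣ t ^ 2 := ⟨u * (2 * w), by linear_combination -e1⟩
        have := Int.prime_two.dvd_of_dvd_pow this
        omega
      obtain ⟨t', rfl⟩ : ∃ t', t = 2 * t' := ⟨t / 2, by omega⟩
      have e3 : u * w = t' ^ 2 := by linarith [(by ring : (2 * t') ^ 2 = 4 * t' ^ 2)]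
      obtain ⟨i, hi⟩ := Int.sq_of_isCoprime huw e3
      have hi : u = i ^ 2 := by
        rcases hi with h | h
        · exact h
        · exfalso; linarith [sq_nonneg i]
      obtain ⟨j, hj⟩ := Int.sq_of_isCoprime huw.symm (by rw [mul_comm]; exact e3)
      have hj : w = j ^ 2 := by
        rcases hj with h | h
        · exact h
        · exfalso; linarith [sq_nonneg j]
      subst hi hj
      have hi2 : i % 2 = 1 := by
        rcases Int.emod_two_eq_zero_or_one i with h | h
        · rw [pow_two, Int.mul_emod, h] at hu2; norm_num at hu2
        · exact h
      have hij : IsCoprime i j :=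
        (IsCoprime.pow_left_iff (by norm_num)).1 ((IsCoprime.pow_right_iff (by norm_num)).1 huw)
      have hj0 := ih i j s hsz hi2 hij (by linear_combination e2)
      subst hj0
      simp at hv
    rcases k5 with ⟨a1, a2⟩ | ⟨a1, a2⟩
    · exact key q p hq hp a2 a1 hcpq.symm (by linear_combination -k2) (by linear_combination -k3 + hs)
    · exact key p q hp hq a1 a2 hcpq (by linear_combination -k2) (by linear_combination -k3 + hs)

/-- `a⁴ - b⁴ = c²` for coprime `a`, `b` of opposite parity. -/
theorem no_diff {a b c : ℤ} (hab : IsCoprime a b) (hpar : (a + b) % 2 = 1)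
    (h : a ^ 4 - b ^ 4 = c ^ 2) : a * b = 0 := by
  have hc2 : c % 2 = 1 := by
    rcases Int.emod_two_eq_zero_or_one c with hc | hc
    · exfalso
      have e : (2 : ℤ) ∣ (a + b) * ((a - b) * (a ^ 2 + b ^ 2)) :=
        ⟨c / 2 * c, by
          have : c = 2 * (c / 2) := by omega
          linear_combination h + c * this⟩
      rcases Int.prime_two.dvd_or_dvd e with h1 | h1
      · omega
      rcases Int.prime_two.dvd_or_dvd h1 with h1 | h1
      · omega
      · have : (2 : ℤ) ∣ (a + b) ^ 2 := by
          have := dvd_add h1 (Dvd.intro (a * b) rfl : (2 : ℤ) ∣ 2 * (a * b))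
          have e : (a + b) ^ 2 = a ^ 2 + b ^ 2 + 2 * (a * b) := by ring
          rw [e]; exact this
        have := Int.prime_two.dvd_of_dvd_pow this
        omega
    · exact hc
  have hcop : IsCoprime c (a * b) := by
    have h1 : IsCoprime (c ^ 2) a := by
      rw [← h]
      have : IsCoprime (-b ^ 4 + a * a ^ 3) a :=
        ((hab.symm.pow_left (m := 4)).neg_left).add_mul_left_left (a ^ 3)
      convert this using 1; ring
    have h2 : IsCoprime (c ^ 2) b := by
      rw [← h]
      have : IsCoprime (a ^ 4 + b * (- b ^ 3)) b :=
        (hab.pow_left (m := 4)).add_mul_left_left (-b ^ 3)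
      convert this using 1; ring
    exact (IsCoprime.pow_left_iff (by norm_num)).1 (h1.mul_right h2)
  exact descent_four _ c (a * b) (a ^ 4 + b ^ 4) le_rfl hc2 hcop
    (by linear_combination (-(c ^ 2) - (a ^ 4 - b ^ 4)) * h)

theorem no_diff_two {a b c : ℤ} (hpar : (a + b) % 2 = 0)
    (h : a ^ 4 - b ^ 4 = 2 * c ^ 2) : a * b = 0 ∨ c = 0 := by
  by_contra hne
  push Not at hne
  have hev : (2 : ℤ) ∣ a ^ 4 + b ^ 4 := by
    have h1 : (2 : ℤ) ∣ (a + b) ^ 4 := dvd_pow (by omega) (by norm_num)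
    have := dvd_sub h1 (Dvd.intro (2 * a ^ 3 * b + 3 * a ^ 2 * b ^ 2 + 2 * a * b ^ 3) rfl :
      (2 : ℤ) ∣ 2 * (2 * a ^ 3 * b + 3 * a ^ 2 * b ^ 2 + 2 * a * b ^ 3))
    have e : a ^ 4 + b ^ 4 =
      (a + b) ^ 4 - 2 * (2 * a ^ 3 * b + 3 * a ^ 2 * b ^ 2 + 2 * a * b ^ 3) := by ring
    rw [e]; exact this
  obtain ⟨k, hk⟩ := hev
  refine not_fermat_42 (c := k) hne.2 hne.1 ?_
  have : 4 * (c ^ 4 + (a * b) ^ 4) = 4 * k ^ 2 := by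
    linear_combination (-(2 * c ^ 2) - (a ^ 4 - b ^ 4)) * h + (a ^ 4 + b ^ 4 + 2 * k) * hk
  linarith

theorem core {a b Y : ℤ} (hab : IsCoprime a b)
    (h : Y ^ 2 = (a ^ 4 - b ^ 4) * (a ^ 2 - 2 * a * b - b ^ 2) *
      ((a ^ 4 + b ^ 4) ^ 2 - 8 * a ^ 3 * b ^ 3 * (a ^ 2 - b ^ 2))) :
    a * b = 0 ∨ a ^ 4 = b ^ 4 := by
  -- divide out the power of two
  obtain ⟨k, Q', G', hk, hQ, hG, hQ', hG'⟩ : ∃ k Q' G' : ℤ,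
      ((k = 1 ∧ (a + b) % 2 = 1) ∨ (k = 2 ∧ (a + b) % 2 = 0)) ∧
      a ^ 2 - 2 * a * b - b ^ 2 = k * Q' ∧
      (a ^ 4 + b ^ 4) ^ 2 - 8 * a ^ 3 * b ^ 3 * (a ^ 2 - b ^ 2) = k ^ 2 * G' ∧
      Q' % 2 = 1 ∧ G' % 2 = 1 := by
    rcases Int.emod_two_eq_zero_or_one (a + b) with hp | hp
    · have hao : a % 2 = 1 ∧ b % 2 = 1 := by
        rcases Int.emod_two_eq_zero_or_one a with ha | ha
        · exfalso
          have := hab.isUnit_of_dvd' (x := 2) (by omega) (by omega)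
          exact Int.prime_two.not_isUnit this
        · omega
      obtain ⟨i, rfl⟩ : ∃ i, a = 2 * i + 1 := ⟨a / 2, by omega⟩
      obtain ⟨j, rfl⟩ : ∃ j, b = 2 * j + 1 := ⟨b / 2, by omega⟩
      -- a⁴ + b⁴ = 2 (2 w + 1)
      obtain ⟨w, hw⟩ : ∃ w, (2 * i + 1) ^ 4 + (2 * j + 1) ^ 4 = 2 * (2 * w + 1) :=
        ⟨4 * i ^ 4 + 8 * i ^ 3 + 6 * i ^ 2 + 2 * i + 4 * j ^ 4 + 8 * j ^ 3 + 6 * j ^ 2 + 2 * j,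
          by ring⟩
      refine ⟨2, 2 * (i ^ 2 + i - j ^ 2 - j - 2 * i * j - i - j) - 1,
        2 * (2 * w ^ 2 + 2 * w - (2 * i + 1) ^ 3 * (2 * j + 1) ^ 3 *
          ((2 * i + 1) ^ 2 - (2 * j + 1) ^ 2)) + 1, Or.inr ⟨rfl, hp⟩, by ring, ?_, by omega,
          by omega⟩
      rw [hw]; ring
    · refine ⟨1, _, _, Or.inl ⟨rfl, hp⟩, (one_mul _).symm, (by rw [one_pow, one_mul]), ?_, ?_⟩
      · obtain ⟨s, hs⟩ : ∃ s, a = 2 * s + 1 - b := ⟨(a + b) / 2, by omega⟩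
        subst hs
        have : (2 * s + 1 - b) ^ 2 - 2 * (2 * s + 1 - b) * b - b ^ 2 =
          2 * (2 * s ^ 2 + 2 * s + b ^ 2 - 4 * s * b - 2 * b) + 1 := by ring
        omega
      · obtain ⟨s, hs⟩ : ∃ s, a ^ 4 + b ^ 4 = 2 * s + 1 := by
          obtain ⟨s, hs⟩ : ∃ s, a = 2 * s + 1 - b := ⟨(a + b) / 2, by omega⟩
          obtain ⟨r, hr⟩ : ∃ r, (a + b) ^ 2 = 2 * r + 1 := ⟨2 * s ^ 2 + 2 * s, by rw [hs]; ring⟩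
          refine ⟨2 * r ^ 2 + 2 * r - (2 * a ^ 3 * b + 3 * a ^ 2 * b ^ 2 + 2 * a * b ^ 3), ?_⟩
          linear_combination ((a + b) ^ 2 + 2 * r + 1) * hr
        rw [hs]
        have : (2 * s + 1) ^ 2 - 8 * a ^ 3 * b ^ 3 * (a ^ 2 - b ^ 2) =
          2 * (2 * s ^ 2 + 2 * s - 4 * (a ^ 3 * b ^ 3 * (a ^ 2 - b ^ 2))) + 1 := by ring
        omega
  have hkne : k ≠ 0 := by rcases hk with ⟨rfl, _⟩ | ⟨rfl, _⟩ <;> norm_num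
  rw [hQ, hG] at h
  -- k is nonzero modulo odd primes
  have hkz : ∀ p : ℕ, p.Prime → (2 : ZMod p) ≠ 0 → (k : ZMod p) ≠ 0 := by
    intro p hp h2
    have := Fact.mk hp
    rcases hk with ⟨rfl, _⟩ | ⟨rfl, _⟩
    · simp
    · simpa using h2
  have castQ : ∀ p : ℕ, (a : ZMod p) ^ 2 - 2 * a * b - b ^ 2 = k * Q' := by
    intro p; exact_mod_cast congrArg (Int.cast : ℤ → ZMod p) hQ
  have castG : ∀ p : ℕ, ((a : ZMod p) ^ 4 + b ^ 4) ^ 2 - 8 * a ^ 3 * b ^ 3 * (a ^ 2 - b ^ 2) =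
      k ^ 2 * G' := by
    intro p; exact_mod_cast congrArg (Int.cast : ℤ → ZMod p) hG
  have cQG : ∀ p : ℕ, p.Prime → (Q' : ZMod p) = 0 → (G' : ZMod p) = 0 → False := by
    intro p hp hq hg
    have := Fact.mk hp
    have h2 := zmod_two_ne hQ' hp hq
    have e1 := castQ p
    have e2 := castG p
    rw [hq, mul_zero] at e1
    rw [hg, mul_zero] at e2
    have : (a : ZMod p) = 0 ∧ (b : ZMod p) = 0 := by
      by_cases h5 : (5 : ZMod p) = 0
      · have : p ∣ 5 := (ZMod.natCast_eq_zero_iff 5 p).1 (by exact_mod_cast h5)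
        have : p = 5 := (Nat.prime_dvd_prime_iff_eq hp (by norm_num)).1 this
        subst this
        exact mod5_Q _ _ e1
      · exact field_Q_G _ _ h2 h5 e1 e2
    exact zmod_not_both hab hp this.1 this.2
  have cQA : ∀ p : ℕ, p.Prime → (Q' : ZMod p) = 0 → ((a ^ 4 - b ^ 4 : ℤ) : ZMod p) = 0 →
      False := by
    intro p hp hq hA
    have := Fact.mk hp
    have h2 := zmod_two_ne hQ' hp hq
    have e1 := castQ p
    rw [hq, mul_zero] at e1
    push_cast at hA
    have := field_Q_A _ _ h2 e1 hA
    exact zmod_not_both hab hp this.1 this.2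
  -- the odd part of Q is plus or minus a square
  have hsqQ : ∃ q, Q' = q ^ 2 ∨ Q' = - q ^ 2 := by
    have hc : IsCoprime Q' (k ^ 3 * (a ^ 4 - b ^ 4) * G') := by
      apply coprime_of_zmod
      intro p hp hq hr
      have := Fact.mk hp
      have h2 := zmod_two_ne hQ' hp hq
      rw [Int.cast_mul, Int.cast_mul, Int.cast_pow] at hr
      rcases mul_eq_zero.1 hr with hr | hr
      · rcases mul_eq_zero.1 hr with hr | hr
        · exact hkz p hp h2 (pow_eq_zero_iff (by norm_num) |>.1 hr)
        · exact cQA p hp hq hr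
      · exact cQG p hp hq hr
    exact Int.sq_of_isCoprime hc (c := Y) (by linear_combination -h)
  obtain ⟨q, hq⟩ := hsqQ
  have c17 : (a : ZMod 17) ^ 2 + (b : ZMod 17) ^ 2 = 0 → (a : ZMod 17) = 0 ∧ (b : ZMod 17) = 0 := by
    intro hS
    refine mod17_Q a b q hS ?_
    have e := castQ 17
    rcases hk with ⟨rfl, _⟩ | ⟨rfl, _⟩ <;> rcases hq with rfl | rfl <;> push_cast at e <;>
      rw [e] <;> simp
  have cAG : ∀ p : ℕ, p.Prime → ((a ^ 4 - b ^ 4 : ℤ) : ZMod p) = 0 → (G' : ZMod p) = 0 →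
      False := by
    intro p hp hA hg
    have := Fact.mk hp
    have h2 := zmod_two_ne hG' hp hg
    have e2 := castG p
    rw [hg, mul_zero] at e2
    push_cast at hA
    have : (a : ZMod p) = 0 ∧ (b : ZMod p) = 0 := by
      refine field_A_G _ _ h2 ?_ hA e2
      intro h17 hS
      have : p ∣ 17 := (ZMod.natCast_eq_zero_iff 17 p).1 (by exact_mod_cast h17)
      have : p = 17 := (Nat.prime_dvd_prime_iff_eq hp (by norm_num)).1 this
      subst this
      exact c17 hS
    exact zmod_not_both hab hp this.1 this.2
  -- k A is plus or minus a square
  have hsqA : ∃ c, k * (a ^ 4 - b ^ 4) = c ^ 2 ∨ k * (a ^ 4 - b ^ 4) = - c ^ 2 := by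
    have hc : IsCoprime (k * (a ^ 4 - b ^ 4)) (Q' * G') := by
      apply coprime_of_zmod
      intro p hp hr hs
      have := Fact.mk hp
      rw [Int.cast_mul] at hr hs
      rcases mul_eq_zero.1 hs with hs | hs
      · rcases mul_eq_zero.1 hr with hr | hr
        · exact hkz p hp (zmod_two_ne hQ' hp hs) hr
        · exact cQA p hp hs hr
      · rcases mul_eq_zero.1 hr with hr | hr
        · exact hkz p hp (zmod_two_ne hG' hp hs) hr
        · exact cAG p hp hr hs
    have hkY : k ∣ Y := by
      have : k ^ 2 ∣ Y ^ 2 := ⟨k * (a ^ 4 - b ^ 4) * (Q' * G'), by linear_combination h⟩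
      exact (Int.pow_dvd_pow_iff (by norm_num)).1 this
    obtain ⟨Z, rfl⟩ := hkY
    refine Int.sq_of_isCoprime hc (c := Z) ?_
    apply mul_left_cancel₀ (pow_ne_zero 2 hkne)
    linear_combination -h
  obtain ⟨c, hc⟩ := hsqA
  rcases hk with ⟨rfl, hp⟩ | ⟨rfl, hp⟩
  · left
    rcases hc with hc | hc
    · exact no_diff hab hp (c := c) (by linear_combination hc)
    · have := no_diff hab.symm (by omega) (c := c) (by linear_combination -hc)
      rwa [mul_comm]
  · have hc2 : (2 : ℤ) ∣ c := by
      apply Int.prime_two.dvd_of_dvd_pow (n := 2)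
      rcases hc with hc | hc
      · exact ⟨_, hc.symm⟩
      · exact ⟨-(a ^ 4 - b ^ 4), by linear_combination hc⟩
    obtain ⟨d, rfl⟩ := hc2
    rcases hc with hc | hc
    · have hd : a ^ 4 - b ^ 4 = 2 * d ^ 2 := by linarith [(by ring : (2 * d) ^ 2 = 4 * d ^ 2)]
      rcases no_diff_two hp hd with h0 | h0
      · exact Or.inl h0
      · right; rw [h0] at hd; linarith
    · have hd : b ^ 4 - a ^ 4 = 2 * d ^ 2 := by linarith [(by ring : (2 * d) ^ 2 = 4 * d ^ 2)]
      rcases no_diff_two (by omega) hd with h0 | h0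
      · left; rwa [mul_comm]
      · right; rw [h0] at hd; linarith


/-- The affine rational points of the hyperelliptic curve
`y² = (x⁴ − 1)(x² − 2x − 1)(x⁸ − 8x⁵ + 2x⁴ + 8x³ + 1)` are exactly
`(±1, 0)` and `(0, ±1)`. -/
theorem genus6_curve_points (x y : ℚ) :
    y ^ 2 = (x ^ 4 - 1) * (x ^ 2 - 2 * x - 1) *
      (x ^ 8 - 8 * x ^ 5 + 2 * x ^ 4 + 8 * x ^ 3 + 1) ↔
    (x = 1 ∧ y = 0) ∨ (x = -1 ∧ y = 0) ∨ (x = 0 ∧ y = 1) ∨ (x = 0 ∧ y = -1) := by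
  constructor
  · intro h
    have hden : (x.den : ℚ) ≠ 0 := by exact_mod_cast x.den_nz
    have hx : x = x.num / x.den := (Rat.num_div_den x).symm
    have hcop : IsCoprime x.num (x.den : ℤ) := by
      rw [Int.isCoprime_iff_gcd_eq_one]
      exact x.reduced
    generalize hA : x.num = a at *
    generalize hB : (x.den : ℤ) = b at *
    have hBq : (x.den : ℚ) = (b : ℚ) := by rw [← hB]; simp
    rw [hBq] at hx hden
    have hxb : x * b = a := by rw [hx]; field_simp
    set P : ℤ := (a ^ 4 - b ^ 4) * (a ^ 2 - 2 * a * b - b ^ 2) *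
      ((a ^ 4 + b ^ 4) ^ 2 - 8 * a ^ 3 * b ^ 3 * (a ^ 2 - b ^ 2)) with hP
    have hsq : IsSquare (P : ℚ) := by
      refine ⟨y * b ^ 7, ?_⟩
      rw [hP]
      push_cast
      rw [← hxb]
      linear_combination (-(b : ℚ) ^ 14) * h
    rw [Rat.isSquare_intCast_iff] at hsq
    obtain ⟨Y, hY⟩ := hsq
    have hcases := core hcop (Y := Y) (by rw [← hP, hY]; ring)
    have hx' : x = 0 ∨ x = 1 ∨ x = -1 := by
      rcases hcases with h0 | h0
      · left
        rcases mul_eq_zero.1 h0 with h1 | h1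
        · rw [hx, h1]; simp
        · exact absurd (by rw [h1]; simp) hden
      · right
        have h1 : (a : ℚ) ^ 4 = (b : ℚ) ^ 4 := by exact_mod_cast h0
        have h2 : x ^ 4 = 1 := by rw [hx, div_pow, h1, div_self (pow_ne_zero 4 hden)]
        have h3 : (x ^ 2 + 1) * ((x - 1) * (x + 1)) = 0 := by linear_combination h2
        have h4 : x ^ 2 + 1 ≠ 0 := by positivity
        rcases mul_eq_zero.1 ((mul_eq_zero.1 h3).resolve_left h4) with h5 | h5
        · left; linarith
        · right; linarith
    clear hA hB hx hxb hBq
    rcases hx' with h0 | h0 | h0 <;> rw [h0] at h ⊢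
    · have : (y - 1) * (y + 1) = 0 := by linear_combination h
      rcases mul_eq_zero.1 this with h5 | h5
      · right; right; left; exact ⟨rfl, by linarith⟩
      · right; right; right; exact ⟨rfl, by linarith⟩
    · left
      refine ⟨rfl, pow_eq_zero_iff (two_ne_zero) |>.1 (by linear_combination h : y ^ 2 = 0)⟩
    · right; left
      refine ⟨rfl, pow_eq_zero_iff (two_ne_zero) |>.1 (by linear_combination h : y ^ 2 = 0)⟩
  · rintro (⟨rfl, rfl⟩ | ⟨rfl, rfl⟩ | ⟨rfl, rfl⟩ | ⟨rfl, rfl⟩) <;> norm_num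
end
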